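/- arXiv:1109.6528 — 2 statements merged into one kernel-verified Lean document; each statement's English description precedes it below -/
import Mathlib

section
/- Let (R,m) be a Cohen-Macaulay local ring of dimension d. If M is a reduced G-perfect R-module of G-dimension n, then depth_R(M) + depth_R(λM) = d + depth_R(Ext^n_R(M,R)). -/
open CategoryTheory

noncomputable section

universe u

/-- The `i`-th Ext group `Ext^i_R(M,N)`, as a type (with its `R`-module structure). -/
abbrev extM (R : Type u) [CommRing R] (i : ℕ) (M N : Type u) [AddCommGroup M] [Module R M]
    [AddCommGroup N] [Module R N] : Type u :=
  ((Ext R (ModuleCat.{u} R) i).obj (Opposite.op (ModuleCat.of R M))).obj (ModuleCat.of R N)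

/-- The `i`-th Tor group `Tor^R_i(M,N)`, as a type. -/
abbrev torM (R : Type u) [CommRing R] (i : ℕ) (M N : Type u) [AddCommGroup M] [Module R M]
    [AddCommGroup N] [Module R N] : Type u :=
  ((Tor (ModuleCat.{u} R) i).obj (ModuleCat.of R M)).obj (ModuleCat.of R N)

/-- The `i`-th local cohomology `H^i_I(M)`, as a type. -/
abbrev locCoh (R : Type u) [CommRing R] (I : Ideal R) (i : ℕ) (M : Type u) [AddCommGroup M]
    [Module R M] : Type u :=
  (localCohomology I i).obj (ModuleCat.of R M)

/-- A submodule `N ≤ M` is superfluous if `K ⊔ N = ⊤` implies `K = ⊤`. -/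
def Submodule.IsSuperfluous {R M : Type u} [CommRing R] [AddCommGroup M] [Module R M]
    (N : Submodule R M) : Prop :=
  ∀ K : Submodule R M, K ⊔ N = ⊤ → K = ⊤

/-- A minimal projective resolution of `M` by finitely generated projective modules:
each `P i → Ω^i M` is a projective cover (i.e. has superfluous kernel). -/
structure MinRes (R : Type u) [CommRing R] (M : Type u) [AddCommGroup M] [Module R M] where
  P : ℕ → ModuleCat.{u} R
  projective : ∀ i, Module.Projective R (P i)
  finite : ∀ i, Module.Finite R (P i)
  d : (i : ℕ) → (↥(P (i + 1)) →ₗ[R] ↥(P i))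
  ε : ↥(P 0) →ₗ[R] M
  surj : Function.Surjective ε
  exact0 : LinearMap.range (d 0) = LinearMap.ker ε
  exact : ∀ i, LinearMap.range (d (i + 1)) = LinearMap.ker (d i)
  min_eps : (LinearMap.ker ε).IsSuperfluous
  min_d : ∀ i, (LinearMap.ker (d i)).IsSuperfluous

namespace MinRes

variable {R M : Type u} [CommRing R] [AddCommGroup M] [Module R M]

/-- `T k F` is the Auslander-Bridger transpose `𝒯_{k+1} M = Tr Ω^k M`, computed as the
cokernel of `P_k* → P_{k+1}*`. -/
def T (F : MinRes R M) (k : ℕ) : Type u :=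
  (Module.Dual R ↥(F.P (k + 1))) ⧸ LinearMap.range (F.d k).dualMap

instance (F : MinRes R M) (k : ℕ) : AddCommGroup (F.T k) :=
  inferInstanceAs (AddCommGroup ((Module.Dual R ↥(F.P (k + 1))) ⧸
    LinearMap.range (F.d k).dualMap))

instance (F : MinRes R M) (k : ℕ) : Module R (F.T k) :=
  inferInstanceAs (Module R ((Module.Dual R ↥(F.P (k + 1))) ⧸
    LinearMap.range (F.d k).dualMap))

/-- The transpose `Tr M = coker(P₀* → P₁*)` computed from a minimal projective presentation. -/
abbrev Tr (F : MinRes R M) : Type u := F.T 0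

/-- `λM = ΩTr M`, realized as the image of `P₀* → P₁*` for a minimal projective
presentation `P₁ → P₀ → M → 0`. -/
def lambdaMod (F : MinRes R M) : Type u :=
  ↥(LinearMap.range (F.d 0).dualMap)

instance (F : MinRes R M) : AddCommGroup F.lambdaMod :=
  inferInstanceAs (AddCommGroup ↥(LinearMap.range (F.d 0).dualMap))

instance (F : MinRes R M) : Module R F.lambdaMod :=
  inferInstanceAs (Module R ↥(LinearMap.range (F.d 0).dualMap))

end MinRes

/-- `M` is a horizontally linked `R`-module, i.e. `M ≅ λλM`. -/
def IsHorizontallyLinked (R : Type u) [CommRing R] (M : Type u) [AddCommGroup M]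
    [Module R M] : Prop :=
  ∃ (F : MinRes R M) (G : MinRes R F.lambdaMod), Nonempty (G.lambdaMod ≃ₗ[R] M)

/-- `M` and `N` are horizontally linked to each other: `M ≅ λN` and `N ≅ λM`. -/
def MutuallyLinked (A : Type u) [CommRing A] (M N : Type u) [AddCommGroup M] [Module A M]
    [AddCommGroup N] [Module A N] : Prop :=
  ∃ (F : MinRes A M) (G : MinRes A N),
    Nonempty (F.lambdaMod ≃ₗ[A] N) ∧ Nonempty (G.lambdaMod ≃ₗ[A] M)

/-- `M` is linked to `N` by the ideal `c`: `c` annihilates both modules and they are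
horizontally linked to each other as `R ⧸ c`-modules. -/
def LinkedBy (R : Type u) [CommRing R] (c : Ideal R) (M N : Type u) [AddCommGroup M]
    [Module R M] [AddCommGroup N] [Module R N] : Prop :=
  ∃ (hM : Module.IsTorsionBySet R M c) (hN : Module.IsTorsionBySet R N c),
    letI := hM.module
    letI := hN.module
    MutuallyLinked (R ⧸ c) M N

/-- A stable module: no nonzero projective direct summand. -/
def IsStableModule (R : Type u) [CommRing R] (M : Type u) [AddCommGroup M] [Module R M] : Prop :=
  ∀ N : Submodule R M, Module.Projective R ↥N → (∃ N' : Submodule R M, IsCompl N N') → N = ⊥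

/-- `M` has G-dimension zero: `M` is finitely generated and reflexive,
and `Ext^i(M,R) = 0 = Ext^i(M*,R)` for all `i > 0`. -/
def IsGDimZero (R : Type u) [CommRing R] (M : Type u) [AddCommGroup M] [Module R M] : Prop :=
  Module.Finite R M ∧ Function.Bijective (Module.Dual.eval R M) ∧
    (∀ i : ℕ, 0 < i → Subsingleton (extM R i M R)) ∧
    (∀ i : ℕ, 0 < i → Subsingleton (extM R i (Module.Dual R M) R))

/-- `M` admits a resolution of length `≤ n` by modules of G-dimension zero. -/
def GDimLE (R : Type u) [CommRing R] : ℕ → ModuleCat.{u} R → Prop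
  | 0, M => IsGDimZero R ↥M
  | n + 1, M =>
    ∃ (G : ModuleCat.{u} R) (f : ↥G →ₗ[R] ↥M), IsGDimZero R ↥G ∧ Function.Surjective f ∧
      GDimLE R n (ModuleCat.of R ↥(LinearMap.ker f))

/-- The G-dimension of `M`: the minimal length of a resolution of `M` by modules of
G-dimension zero (`∞` if there is none). -/
def GDim (R : Type u) [CommRing R] (M : Type u) [AddCommGroup M] [Module R M] : ℕ∞ :=
  sInf {n : ℕ∞ | ∃ k : ℕ, n = k ∧ GDimLE R k (ModuleCat.of R M)}

/-- The reduced grade of `M`: `rgr M = inf{ i > 0 | Ext^i(M,R) ≠ 0 }`. -/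
def rgr (R : Type u) [CommRing R] (M : Type u) [AddCommGroup M] [Module R M] : ℕ∞ :=
  sInf {n : ℕ∞ | ∃ k : ℕ, n = k ∧ 0 < k ∧ ¬ Subsingleton (extM R k M R)}

/-- The grade of `M`: `gr M = inf{ i ≥ 0 | Ext^i(M,R) ≠ 0 }`. -/
def egrade (R : Type u) [CommRing R] (M : Type u) [AddCommGroup M] [Module R M] : ℕ∞ :=
  sInf {n : ℕ∞ | ∃ k : ℕ, n = k ∧ ¬ Subsingleton (extM R k M R)}

/-- `depth_I(M) = inf{ i | Ext^i(R/I, M) ≠ 0 }`; for `I` the maximal ideal of a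
local ring this is the depth of `M`. -/
def edepth (R : Type u) [CommRing R] (I : Ideal R) (M : Type u) [AddCommGroup M]
    [Module R M] : ℕ∞ :=
  sInf {n : ℕ∞ | ∃ k : ℕ, n = k ∧ ¬ Subsingleton (extM R k (R ⧸ I) M)}

/-- The depth of the local ring `R`. -/
def rdepth (R : Type u) [CommRing R] [IsLocalRing R] : ℕ∞ :=
  edepth R (IsLocalRing.maximalIdeal R) R

/-- `depth_{R_p}(M_p)`. -/
def locDepth (R : Type u) [CommRing R] (p : Ideal R) [p.IsPrime] (M : Type u) [AddCommGroup M]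
    [Module R M] : ℕ∞ :=
  edepth (Localization.AtPrime p) (IsLocalRing.maximalIdeal (Localization.AtPrime p))
    (LocalizedModule p.primeCompl M)

/-- `depth R_p`. -/
def locRingDepth (R : Type u) [CommRing R] (p : Ideal R) [p.IsPrime] : ℕ∞ :=
  rdepth (Localization.AtPrime p)

/-- `Gdim_{R_p}(M_p)`. -/
def locGDim (R : Type u) [CommRing R] (p : Ideal R) [p.IsPrime] (M : Type u) [AddCommGroup M]
    [Module R M] : ℕ∞ :=
  GDim (Localization.AtPrime p) (LocalizedModule p.primeCompl M)

/-- `rgr_{R_p}(M_p)`. -/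
def locRgr (R : Type u) [CommRing R] (p : Ideal R) [p.IsPrime] (M : Type u) [AddCommGroup M]
    [Module R M] : ℕ∞ :=
  rgr (Localization.AtPrime p) (LocalizedModule p.primeCompl M)

/-- `dim_{R_p}(M_p)`, the Krull dimension of the support of `M_p` over `R_p`. -/
def locDim (R : Type u) [CommRing R] (p : Ideal R) [p.IsPrime] (M : Type u) [AddCommGroup M]
    [Module R M] : WithBot ℕ∞ :=
  ringKrullDim ((Localization.AtPrime p) ⧸
    Module.annihilator (Localization.AtPrime p) (LocalizedModule p.primeCompl M))

/-- `M` satisfies the condition `S̃_k`: `depth_{R_p}(M_p) ≥ min{k, depth R_p}` for all primes. -/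
def Stilde (R : Type u) [CommRing R] (k : ℕ) (M : Type u) [AddCommGroup M] [Module R M] : Prop :=
  ∀ (p : Ideal R) (_ : p.IsPrime), min (k : ℕ∞) (locRingDepth R p) ≤ locDepth R p M

/-- `M` satisfies Serre's condition `(S_k)`:
`depth_{R_p}(M_p) ≥ min{k, dim_{R_p}(M_p)}` for all primes. -/
def SerreS (R : Type u) [CommRing R] (k : ℕ) (M : Type u) [AddCommGroup M] [Module R M] : Prop :=
  ∀ (p : Ideal R) (_ : p.IsPrime),
    min (k : WithBot ℕ∞) (locDim R p M) ≤ (locDepth R p M : WithBot ℕ∞)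

/-- `M` is a `k`-th syzygy module. -/
def IsKthSyzygy (R : Type u) [CommRing R] : ℕ → ModuleCat.{u} R → Prop
  | 0, _ => True
  | k + 1, M =>
    ∃ (P : ModuleCat.{u} R) (f : ↥M →ₗ[R] ↥P), Module.Projective R ↥P ∧ Module.Finite R ↥P ∧
      Function.Injective f ∧ IsKthSyzygy R k (ModuleCat.of R (↥P ⧸ LinearMap.range f))

/-- The `I`-torsion submodule `Γ_I(M) = { x | I^n x = 0 for some n }`. -/
def gammaTorsion (R : Type u) [CommRing R] (I : Ideal R) (M : Type u) [AddCommGroup M]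
    [Module R M] : Submodule R M where
  carrier := {x | ∃ n : ℕ, ∀ a ∈ I ^ n, a • x = 0}
  zero_mem' := ⟨0, fun a _ => smul_zero a⟩
  add_mem' := by
    rintro x y ⟨n, hn⟩ ⟨m, hm⟩
    exact ⟨n + m, fun a ha => by
      rw [smul_add, hn a (Ideal.pow_le_pow_right (Nat.le_add_right n m) ha),
        hm a (Ideal.pow_le_pow_right (Nat.le_add_left m n) ha), add_zero]⟩
  smul_mem' := by
    rintro c x ⟨n, hn⟩
    exact ⟨n, fun a ha => by rw [smul_comm, hn a ha, smul_zero]⟩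

/-- `N` has finite flat dimension (characterized by uniform vanishing of `Tor`). -/
def HasFiniteFlatDim (R : Type u) [CommRing R] (N : Type u) [AddCommGroup N] [Module R N] : Prop :=
  ∃ n : ℕ, ∀ i : ℕ, n < i → ∀ (M : ModuleCat.{u} R), Subsingleton (torM R i ↥M N)

/-- `N` has finite injective dimension (characterized by uniform vanishing of `Ext`). -/
def HasFiniteInjDim (R : Type u) [CommRing R] (N : Type u) [AddCommGroup N] [Module R N] : Prop :=
  ∃ n : ℕ, ∀ i : ℕ, n < i → ∀ (M : ModuleCat.{u} R), Subsingleton (extM R i ↥M N)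

/-- `K` is a semidualizing `R`-module. -/
def IsSemidualizing (R : Type u) [CommRing R] (K : Type u) [AddCommGroup K] [Module R K] : Prop :=
  Module.Finite R K ∧ Function.Bijective (LinearMap.lsmul R K) ∧
    ∀ i : ℕ, 0 < i → Subsingleton (extM R i K K)

/-- The biduality map `M → Hom(Hom(M,K),K)`. -/
def evalK (R : Type u) [CommRing R] (K M : Type u) [AddCommGroup K] [Module R K]
    [AddCommGroup M] [Module R M] : M →ₗ[R] ((M →ₗ[R] K) →ₗ[R] K) :=
  LinearMap.applyₗ

/-- `M` has `G_K`-dimension zero. -/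
def IsGKDimZero (R : Type u) [CommRing R] (K M : Type u) [AddCommGroup K] [Module R K]
    [AddCommGroup M] [Module R M] : Prop :=
  Module.Finite R M ∧ Function.Bijective (evalK R K M) ∧
    (∀ i : ℕ, 0 < i → Subsingleton (extM R i M K)) ∧
    (∀ i : ℕ, 0 < i → Subsingleton (extM R i (M →ₗ[R] K) K))

/-- `M` admits a resolution of length `≤ n` by modules of `G_K`-dimension zero. -/
def GKDimLE (R : Type u) [CommRing R] (K : Type u) [AddCommGroup K] [Module R K] :
    ℕ → ModuleCat.{u} R → Prop
  | 0, M => IsGKDimZero R K ↥M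
  | n + 1, M =>
    ∃ (G : ModuleCat.{u} R) (f : ↥G →ₗ[R] ↥M), IsGKDimZero R K ↥G ∧ Function.Surjective f ∧
      GKDimLE R K n (ModuleCat.of R ↥(LinearMap.ker f))

/-- The `G_K`-dimension of `M`. -/
def GKDim (R : Type u) [CommRing R] (K M : Type u) [AddCommGroup K] [Module R K]
    [AddCommGroup M] [Module R M] : ℕ∞ :=
  sInf {n : ℕ∞ | ∃ k : ℕ, n = k ∧ GKDimLE R K k (ModuleCat.of R M)}

/-- The grade of a module, `gr_R(M) = grade(Ann_R(M), R) = inf{i | Ext^i(R/Ann M, R) ≠ 0}`. -/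
def grAnn (R : Type u) [CommRing R] (M : Type u) [AddCommGroup M] [Module R M] : ℕ∞ :=
  egrade R (R ⧸ Module.annihilator R M)

/-- The grade of an ideal, `grade(I) = inf{i | Ext^i(R/I, R) ≠ 0}`. -/
def gradeI (R : Type u) [CommRing R] (I : Ideal R) : ℕ∞ :=
  egrade R (R ⧸ I)

/-- The ideal `I` is `G_K`-Gorenstein: `R/I` is `G_K`-perfect and `Ext^{gr I}(R/I, K)` is
cyclic. -/
def IsGKGorensteinIdeal (R : Type u) [CommRing R] (K : Type u) [AddCommGroup K] [Module R K]
    (I : Ideal R) : Prop :=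
  ∃ n : ℕ, grAnn R (R ⧸ I) = (n : ℕ∞) ∧ GKDim R K (R ⧸ I) = (n : ℕ∞) ∧
    ∃ x : extM R n (R ⧸ I) K, Submodule.span R {x} = ⊤

end

open CategoryTheory

noncomputable section
namespace St9

/-- Ext in the derived-category sense. -/
abbrev EX (R : Type u) [CommRing R] (i : ℕ) (M N : Type u) [AddCommGroup M] [Module R M]
    [AddCommGroup N] [Module R N] : Type u :=
  Abelian.Ext (ModuleCat.of R M) (ModuleCat.of R N) i

variable {R : Type u} [CommRing R]

lemma extM_iff (i : ℕ) (M N : Type u) [AddCommGroup M] [Module R M]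
    [AddCommGroup N] [Module R N] :
    Subsingleton (extM R i M N) ↔ Subsingleton (EX R i M N) := by
  let P := ProjectiveResolution.of (ModuleCat.of R M)
  have h1 : Subsingleton (extM R i M N) ↔
      ((P.complex.linearYonedaObj R (ModuleCat.of R N)).ExactAt i) := by
    rw [HomologicalComplex.exactAt_iff_isZero_homology,
      ← (P.isoExt (R := R) i (ModuleCat.of R N)).isZero_iff]
    exact (ModuleCat.isZero_iff_subsingleton (M := ((Ext R (ModuleCat.{u} R) i).obj (Opposite.op (ModuleCat.of R M))).obj (ModuleCat.of R N))).symm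
  rw [h1]
  cases i with
  | zero =>
    rw [HomologicalComplex.exactAt_iff' _ 0 0 1 (by simp) (by simp)]
    rw [ShortComplex.moduleCat_exact_iff]
    constructor
    · intro h
      refine ⟨fun a b => ?_⟩
      suffices ∀ a : EX R 0 M N, a = 0 by rw [this a, this b]
      intro a
      obtain ⟨f, hf, rfl⟩ := P.extMk_surjective a 1 rfl
      obtain ⟨g, hg⟩ := h f hf
      have hz : (((P.complex.linearYonedaObj R (ModuleCat.of R N)).sc' 0 0 1).f) = 0 :=
        HomologicalComplex.shape (P.complex.linearYonedaObj R (ModuleCat.of R N)) 0 0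
          (fun hh : (0:ℕ) + 1 = 0 => Nat.succ_ne_zero 0 hh)
      rw [hz] at hg
      have h0 : f = 0 := hg.symm
      subst h0
      simp
    · intro h x hx
      have hx' : P.complex.d 1 0 ≫ (x : P.complex.X 0 ⟶ ModuleCat.of R N) = 0 := hx
      have hh : Subsingleton (ModuleCat.of R M ⟶ ModuleCat.of R N) :=
        Abelian.Ext.addEquiv₀.subsingleton_congr.mp h
      have h2 := P.exact₀.g_desc x hx'
      have h3 : P.exact₀.desc x hx' = 0 := hh.elim _ _
      rw [h3] at h2
      refine ⟨0, ?_⟩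
      rw [map_zero]
      refine Eq.trans ?_ h2
      exact (Limits.comp_zero).symm
  | succ i =>
    rw [HomologicalComplex.exactAt_iff' _ i (i+1) (i+2) (by simp) (by simp)]
    rw [ShortComplex.moduleCat_exact_iff]
    constructor
    · intro h
      refine ⟨fun a b => ?_⟩
      suffices ∀ a : EX R (i+1) M N, a = 0 by rw [this a, this b]
      intro a
      obtain ⟨f, hf, rfl⟩ := P.extMk_surjective a (i+2) rfl
      rw [P.extMk_eq_zero_iff f _ _ hf i rfl]
      exact h f hf
    · intro h x hx
      have := (P.extMk_eq_zero_iff (n := i+1) (Y := ModuleCat.of R N) x (i+2) rfl hx i rfl).1 (Subsingleton.elim (α := EX R (i+1) M N) _ _)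
      exact this


section LES
variable {A B C : Type u} [AddCommGroup A] [Module R A] [AddCommGroup B] [Module R B]
  [AddCommGroup C] [Module R C]

lemma ses {f : A →ₗ[R] B} {g : B →ₗ[R] C} (hf : Function.Injective f)
    (hg : Function.Surjective g) (h : Function.Exact f g) :
    (ModuleCat.shortComplexOfCompEqZero f g h.linearMap_comp_eq_zero).ShortExact where
  exact := ModuleCat.shortComplex_exact _ h
  mono_f := (ModuleCat.mono_iff_injective _).2 hf
  epi_g := (ModuleCat.epi_iff_surjective _).2 hg

/-- Pushforward on Ext. -/
def push {i : ℕ} {X : Type u} [AddCommGroup X] [Module R X] (f : A →ₗ[R] B) (x : EX R i X A) :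
    EX R i X B :=
  x.comp (Abelian.Ext.mk₀ (ModuleCat.ofHom f)) (add_zero i)

/-- Pullback on Ext. -/
def pull {i : ℕ} {Y : Type u} [AddCommGroup Y] [Module R Y] (f : A →ₗ[R] B) (x : EX R i B Y) :
    EX R i A Y :=
  (Abelian.Ext.mk₀ (ModuleCat.ofHom f)).comp x (zero_add i)

variable {X : Type u} [AddCommGroup X] [Module R X] {i : ℕ}

lemma push_comp (f : A →ₗ[R] B) (g : B →ₗ[R] C) (x : EX R i X A) :
    push (g ∘ₗ f) x = push g (push f x) := by
  simp [push, ModuleCat.ofHom_comp, ← Abelian.Ext.mk₀_comp_mk₀, Abelian.Ext.comp_assoc_of_third_deg_zero]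

lemma push_add (f g : A →ₗ[R] B) (x : EX R i X A) : push (f + g) x = push f x + push g x := by
  simp [push, ModuleCat.ofHom_add, Abelian.Ext.mk₀_add]

lemma push_zero (x : EX R i X A) : push (0 : A →ₗ[R] B) x = 0 := by
  have : ModuleCat.ofHom (0 : A →ₗ[R] B) = 0 := rfl
  simp [push, this]

lemma push_smul (r : R) (f : A →ₗ[R] B) (x : EX R i X A) : push (r • f) x = r • push f x := by
  have : ModuleCat.ofHom (r • f) = r • ModuleCat.ofHom f := rfl
  simp [push, this, Abelian.Ext.mk₀_smul]

lemma push_id (x : EX R i X A) : push (LinearMap.id : A →ₗ[R] A) x = x := by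
  have : ModuleCat.ofHom (LinearMap.id : A →ₗ[R] A) = 𝟙 _ := rfl
  simp [push, this]

lemma push_map_add (f : A →ₗ[R] B) (x y : EX R i X A) : push f (x + y) = push f x + push f y := by
  simp [push]

lemma push_map_smul (f : A →ₗ[R] B) (r : R) (x : EX R i X A) : push f (r • x) = r • push f x := by
  simp [push]

lemma push_map_zero (f : A →ₗ[R] B) : push f (0 : EX R i X A) = 0 := by
  simp [push]

/-- Pushforward as a linear map. -/
def pushL (i : ℕ) (X : Type u) [AddCommGroup X] [Module R X] (f : A →ₗ[R] B) :
    EX R i X A →ₗ[R] EX R i X B where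
  toFun := push f
  map_add' := push_map_add f
  map_smul' := fun r x => push_map_smul f r x

lemma push_sum {ι : Type*} (s : Finset ι) (f : ι → (A →ₗ[R] B)) (x : EX R i X A) :
    push (∑ j ∈ s, f j) x = ∑ j ∈ s, push (f j) x := by
  classical
  induction s using Finset.induction_on with
  | empty => simp [push_zero]
  | insert a s ha ih => rw [Finset.sum_insert ha, Finset.sum_insert ha, push_add, ih]

lemma sub_of {T : Type*} [AddCommGroup T] (h : ∀ x : T, x = 0) : Subsingleton T :=
  ⟨fun a b => by rw [h a, h b]⟩

variable {f : A →ₗ[R] B} {g : B →ₗ[R] C} (hf : Function.Injective f)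
    (hg : Function.Surjective g) (h : Function.Exact f g)
include hf hg h

lemma cov1 (hC : Subsingleton (EX R i X C)) {x : EX R (i + 1) X A} (hx : push f x = 0) :
    x = 0 := by
  obtain ⟨y, hy⟩ := Abelian.Ext.covariant_sequence_exact₁ (ModuleCat.of R X) (ses hf hg h) x hx rfl
  have : y = 0 := hC.elim _ _
  rw [← hy, this, Abelian.Ext.zero_comp]

lemma cov1s (hC : Subsingleton (EX R i X C)) (hB : Subsingleton (EX R (i + 1) X B)) :
    Subsingleton (EX R (i + 1) X A) :=
  sub_of fun _ => cov1 hf hg h hC (hB.elim _ _)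

omit hg h in
lemma cov0 {x : EX R 0 X A} (hx : push f x = 0) : x = 0 := by
  haveI : Mono (ModuleCat.ofHom f) := (ModuleCat.mono_iff_injective _).2 hf
  refine Abelian.Ext.postcomp_mk₀_injective_of_mono (ModuleCat.of R X) (ModuleCat.ofHom f) ?_
  rw [map_zero]
  exact hx

omit hg h in
lemma cov0s (hB : Subsingleton (EX R 0 X B)) : Subsingleton (EX R 0 X A) :=
  sub_of fun _ => cov0 hf (hB.elim _ _)

lemma cov2 {x : EX R i X B} (hx : push g x = 0) : ∃ y : EX R i X A, push f y = x :=
  Abelian.Ext.covariant_sequence_exact₂ (ModuleCat.of R X) (ses hf hg h) x hx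

lemma cov3s (hB : Subsingleton (EX R i X B)) (hA : Subsingleton (EX R (i + 1) X A)) :
    Subsingleton (EX R i X C) := by
  refine sub_of fun x => ?_
  obtain ⟨y, hy⟩ := Abelian.Ext.covariant_sequence_exact₃ (ModuleCat.of R X) (ses hf hg h) x rfl
    (hA.elim _ _)
  have : y = 0 := hB.elim _ _
  rw [← hy, this, Abelian.Ext.zero_comp]

lemma con1s (hB : Subsingleton (EX R i B X)) (hC : Subsingleton (EX R (i + 1) C X)) :
    Subsingleton (EX R i A X) := by
  refine sub_of fun x => ?_
  obtain ⟨y, hy⟩ := Abelian.Ext.contravariant_sequence_exact₁ (ses hf hg h) (ModuleCat.of R X) x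
    (add_comm 1 i) (hC.elim _ _)
  have : y = 0 := hB.elim _ _
  rw [← hy, this, Abelian.Ext.comp_zero]

lemma con2s (hA : Subsingleton (EX R i A X)) (hC : Subsingleton (EX R i C X)) :
    Subsingleton (EX R i B X) := by
  refine sub_of fun x => ?_
  obtain ⟨y, hy⟩ := Abelian.Ext.contravariant_sequence_exact₂ (ses hf hg h) (ModuleCat.of R X) x
    (hA.elim _ _)
  have : y = 0 := hC.elim _ _
  rw [← hy, this, Abelian.Ext.comp_zero]

lemma con3s (hA : Subsingleton (EX R i A X)) (hB : Subsingleton (EX R (i + 1) B X)) :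
    Subsingleton (EX R (i + 1) C X) := by
  refine sub_of fun x => ?_
  obtain ⟨y, hy⟩ := Abelian.Ext.contravariant_sequence_exact₃ (ses hf hg h) (ModuleCat.of R X) x
    (hB.elim _ _) (add_comm 1 i)
  have : y = 0 := hA.elim _ _
  rw [← hy, this, Abelian.Ext.comp_zero]

lemma con3ext (hA : ∀ a : A →ₗ[R] X, ∃ b : B →ₗ[R] X, b ∘ₗ f = a)
    (hB : Subsingleton (EX R 1 B X)) :
    Subsingleton (EX R 1 C X) := by
  refine sub_of fun x => ?_
  obtain ⟨y, hy⟩ := Abelian.Ext.contravariant_sequence_exact₃ (ses hf hg h) (ModuleCat.of R X) x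
    (hB.elim _ _) (add_comm 1 0)
  obtain ⟨y', rfl⟩ := Abelian.Ext.mk₀_bijective _ _ |>.2 y
  obtain ⟨b, hb⟩ := hA y'.hom
  have : y' = ModuleCat.ofHom f ≫ ModuleCat.ofHom b := by
    ext1; exact hb.symm
  rw [← hy, this, ← Abelian.Ext.mk₀_comp_mk₀]
  exact (ses hf hg h).extClass_comp_assoc _

lemma con1ext (hC : Subsingleton (EX R 1 C X)) (a : A →ₗ[R] X) :
    ∃ b : B →ₗ[R] X, b ∘ₗ f = a := by
  obtain ⟨y, hy⟩ := Abelian.Ext.contravariant_sequence_exact₁ (ses hf hg h) (ModuleCat.of R X)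
    (Abelian.Ext.mk₀ (ModuleCat.ofHom a)) (add_comm 1 0) (hC.elim _ _)
  obtain ⟨y', rfl⟩ := Abelian.Ext.mk₀_bijective _ _ |>.2 y
  refine ⟨y'.hom, ?_⟩
  rw [Abelian.Ext.mk₀_comp_mk₀] at hy
  have := Abelian.Ext.mk₀_bijective _ _ |>.1 hy
  exact congrArg ModuleCat.Hom.hom this

end LES

section misc
variable {A B : Type u} [AddCommGroup A] [Module R A] [AddCommGroup B] [Module R B]
   {X : Type u} [AddCommGroup X] [Module R X] {i : ℕ}

lemma ex_zero_iff : Subsingleton (EX R 0 A B) ↔ Subsingleton (A →ₗ[R] B) := by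
  rw [Abelian.Ext.addEquiv₀.subsingleton_congr]
  exact ModuleCat.homAddEquiv.subsingleton_congr

lemma ex_proj [Module.Projective R A] : Subsingleton (EX R (i + 1) A B) :=
  haveI : Projective (ModuleCat.of R A) := ModuleCat.projective_of_categoryTheory_projective _
  Abelian.Ext.subsingleton_of_projective _ _ _

lemma ex_congr_right (e : A ≃ₗ[R] B) : Subsingleton (EX R i X A) ↔ Subsingleton (EX R i X B) := by
  have key : ∀ {A B : Type u} [AddCommGroup A] [Module R A] [AddCommGroup B] [Module R B]
      (e : A ≃ₗ[R] B), Subsingleton (EX R i X B) → Subsingleton (EX R i X A) := by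
    intro A B _ _ _ _ e h
    refine sub_of fun x => ?_
    have : push e.symm.toLinearMap (push e.toLinearMap x) = x := by
      rw [← push_comp]; simp [push_id]
    rw [← this, h.elim (push e.toLinearMap x) 0, push_map_zero]
  exact ⟨key e.symm, key e⟩

lemma ex_congr_left (e : A ≃ₗ[R] B) : Subsingleton (EX R i A X) ↔ Subsingleton (EX R i B X) := by
  have key : ∀ {A B : Type u} [AddCommGroup A] [Module R A] [AddCommGroup B] [Module R B]
      (e : A ≃ₗ[R] B), Subsingleton (EX R i B X) → Subsingleton (EX R i A X) := by
    intro A B _ _ _ _ e h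
    refine sub_of fun x => ?_
    have hc : ModuleCat.ofHom e.toLinearMap ≫ ModuleCat.ofHom e.symm.toLinearMap
        = 𝟙 (ModuleCat.of R A) := by
      rw [← ModuleCat.ofHom_comp]; simp
    have : pull e.toLinearMap (pull e.symm.toLinearMap x) = x := by
      rw [pull, pull, Abelian.Ext.mk₀_comp_mk₀_assoc, hc, Abelian.Ext.mk₀_id_comp]
    rw [← this, h.elim (pull e.symm.toLinearMap x) 0, pull, Abelian.Ext.comp_zero]
  exact ⟨key e.symm, key e⟩

end misc

end St9
end

open CategoryTheory

noncomputable section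
namespace St9

section S2
variable {R : Type u} [CommRing R]

/-- vanishing of Ext below `j`. -/
def dge (X : Type u) [AddCommGroup X] [Module R X] (j : ℕ) (N : Type u) [AddCommGroup N]
    [Module R N] : Prop := ∀ i < j, Subsingleton (EX R i X N)

/-- depth exactly `e`. -/
def hasD (X : Type u) [AddCommGroup X] [Module R X] (e : ℕ) (N : Type u) [AddCommGroup N]
    [Module R N] : Prop := dge (R := R) X e N ∧ ¬ Subsingleton (EX R e X N)

lemma edepth_iff (I : Ideal R) (N : Type u) [AddCommGroup N] [Module R N] (e : ℕ) :
    edepth R I N = (e : ℕ∞) ↔ hasD (R := R) (R ⧸ I) e N := by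
  unfold edepth hasD dge
  constructor
  · intro h
    have hne : {n : ℕ∞ | ∃ k : ℕ, n = k ∧ ¬ Subsingleton (extM R k (R ⧸ I) N)}.Nonempty := by
      by_contra hh
      rw [Set.not_nonempty_iff_eq_empty] at hh
      rw [hh, sInf_empty] at h
      exact absurd h (ENat.top_ne_natCast e)
    have hm := csInf_mem hne
    rw [h] at hm
    obtain ⟨k, hk, hk2⟩ := hm
    have : e = k := by exact_mod_cast hk
    subst this
    rw [extM_iff] at hk2
    refine ⟨fun i hi => ?_, hk2⟩
    by_contra hs
    rw [← extM_iff] at hs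
    have : (e : ℕ∞) ≤ i := h ▸ sInf_le ⟨i, rfl, hs⟩
    have : e ≤ i := by exact_mod_cast this
    omega
  · rintro ⟨h1, h2⟩
    rw [← extM_iff] at h2
    apply le_antisymm
    · exact sInf_le ⟨e, rfl, h2⟩
    · apply le_sInf
      rintro _ ⟨k, rfl, hk⟩
      rw [extM_iff] at hk
      by_contra hlt
      push Not at hlt
      exact hk (h1 k (by exact_mod_cast hlt))

variable {X : Type u} [AddCommGroup X] [Module R X]
variable {A B C : Type u} [AddCommGroup A] [Module R A] [AddCommGroup B] [Module R B]
  [AddCommGroup C] [Module R C]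

lemma dge_congr (e : A ≃ₗ[R] B) {j : ℕ} : dge (R := R) X j A ↔ dge (R := R) X j B :=
  forall₂_congr fun _ _ => ex_congr_right e

lemma hasD_congr (e : A ≃ₗ[R] B) {j : ℕ} : hasD (R := R) X j A ↔ hasD (R := R) X j B :=
  and_congr (dge_congr e) (not_congr (ex_congr_right e))

lemma dge_mono {j k : ℕ} (h : dge (R := R) X k A) (hjk : j ≤ k) : dge (R := R) X j A :=
  fun i hi => h i (by omega)

lemma exists_hasD {j : ℕ} (h : ¬ dge (R := R) X j A) : ∃ e < j, hasD (R := R) X e A := by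
  classical
  unfold dge at h
  push Not at h
  have h' : ∃ i, ¬ Subsingleton (EX R i X A) := by
    obtain ⟨i, hi, hh⟩ := h; exact ⟨i, by simpa [not_subsingleton_iff_nontrivial] using hh⟩
  refine ⟨Nat.find h', ?_, ?_, Nat.find_spec h'⟩
  · obtain ⟨i, hi, hh⟩ := h
    exact lt_of_le_of_lt (Nat.find_min' h' (by simpa [not_subsingleton_iff_nontrivial] using hh)) hi
  · intro i hi
    by_contra hs
    exact Nat.find_min h' hi hs

section
variable {f : A →ₗ[R] B} {g : B →ₗ[R] C} (hf : Function.Injective f)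
    (hg : Function.Surjective g) (h : Function.Exact f g)
include hf hg h

/-- depth goes up. -/
lemma dge_ker {d j : ℕ} (hB : dge (R := R) X d B) (hC : dge (R := R) X j C) (hj : j + 1 ≤ d) :
    dge (R := R) X (j + 1) A := by
  intro i hi
  cases i with
  | zero => exact cov0s hf (hB 0 (by omega))
  | succ i => exact cov1s hf hg h (hC i (by omega)) (hB _ (by omega))

lemma dge_coker {d j : ℕ} (hB : dge (R := R) X d B) (hA : dge (R := R) X (j + 1) A) (hj : j ≤ d) :
    dge (R := R) X j C := fun i hi =>
  cov3s hf hg h (hB i (by omega)) (hA _ (by omega))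

lemma hasD_up {d c : ℕ} (hB : dge (R := R) X d B) (hC : hasD (R := R) X c C) (hc : c < d) :
    hasD (R := R) X (c + 1) A :=
  ⟨dge_ker hf hg h hB hC.1 hc, fun hs => hC.2 (cov3s hf hg h (hB c hc) hs)⟩

lemma hasD_down {d a : ℕ} (hB : dge (R := R) X d B) (hA : hasD (R := R) X a A) (ha : a < d) :
    ∃ c, c + 1 = a ∧ hasD (R := R) X c C := by
  cases a with
  | zero => exact absurd (cov0s hf (hB 0 ha)) hA.2
  | succ c =>
    refine ⟨c, rfl, dge_coker hf hg h hB hA.1 (by omega), fun hs => hA.2 ?_⟩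
    exact cov1s hf hg h hs (hB _ ha)
end

/-- elements of Ext into a finite free module are detected by coordinates. -/
lemma push_eq_sum {ι : Type*} [Fintype ι] (b : Module.Basis ι R A) {i : ℕ} (x : EX R i X A) :
    x = ∑ j, push (LinearMap.toSpanSingleton R A (b j)) (push (b.coord j) x) := by
  have : (LinearMap.id : A →ₗ[R] A) = ∑ j, (LinearMap.toSpanSingleton R A (b j)) ∘ₗ (b.coord j) := by
    ext a
    simp [LinearMap.sum_apply, b.sum_repr]
  conv_lhs => rw [← push_id x, this, push_sum]
  simp only [push_comp]

lemma push_ext_free [Module.Finite R A] [Module.Free R A] {i : ℕ} {x : EX R i X A}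
    (h : ∀ φ : A →ₗ[R] R, push φ x = 0) : x = 0 := by
  rw [push_eq_sum (Module.Free.chooseBasis R A) x]
  simp [h, push_map_zero]

lemma dge_free [Module.Finite R A] [Module.Free R A] {j : ℕ} (h : dge (R := R) X j R) :
    dge (R := R) X j A := fun i hi =>
  sub_of fun _ => push_ext_free fun _ => (h i hi).elim _ _

/-- all positive Ext into R vanish -/
def EV (Y : Type u) [AddCommGroup Y] [Module R Y] : Prop := ∀ i, Subsingleton (EX R (i + 1) Y R)

lemma EV_ker {f : A →ₗ[R] B} {g : B →ₗ[R] C} (hf : Function.Injective f)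
    (hg : Function.Surjective g) (h : Function.Exact f g) (hB : EV (R := R) B) (hC : EV (R := R) C) :
    EV (R := R) A := fun i => con1s hf hg h (hB i) (hC (i + 1))

lemma EV_proj [Module.Projective R A] : EV (R := R) A := fun _ => ex_proj

lemma EV_congr (e : A ≃ₗ[R] B) : EV (R := R) A ↔ EV (R := R) B :=
  forall_congr' fun _ => ex_congr_left e

/-- the dual sequence is short exact. -/
lemma dual_inj {g : B →ₗ[R] C} (hg : Function.Surjective g) : Function.Injective g.dualMap :=
  LinearMap.dualMap_injective_of_surjective hg

lemma dual_exact {f : A →ₗ[R] B} {g : B →ₗ[R] C} 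
    (hg : Function.Surjective g) (h : Function.Exact f g) :
    Function.Exact g.dualMap f.dualMap := by
  intro φ
  constructor
  · intro hφ
    have hk : LinearMap.ker g ≤ LinearMap.ker φ := by
      intro b hb
      obtain ⟨a, rfl⟩ := (h b).1 hb
      exact congrArg (fun ψ => ψ a) hφ
    let e := g.quotKerEquivOfSurjective hg
    refine ⟨((LinearMap.ker g).liftQ φ hk) ∘ₗ e.symm.toLinearMap, ?_⟩
    ext b
    have : e.symm (g b) = Submodule.Quotient.mk b := by
      rw [LinearEquiv.symm_apply_eq]; rfl
    simp [LinearMap.dualMap_apply, this]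
  · rintro ⟨ψ, rfl⟩
    ext a
    simp [LinearMap.dualMap_apply, h.apply_apply_eq_zero]

lemma dual_surj {f : A →ₗ[R] B} {g : B →ₗ[R] C} (hf : Function.Injective f)
    (hg : Function.Surjective g) (h : Function.Exact f g) (hC : Subsingleton (EX R 1 C R)) :
    Function.Surjective f.dualMap := fun a => con1ext hf hg h hC a

end S2

/-- a finite free cover -/
lemma exists_cover (R : Type u) [CommRing R] [IsNoetherianRing R] (Y : Type u) [AddCommGroup Y]
    [Module R Y] [Module.Finite R Y] :
    ∃ (n : ℕ) (p : (Fin n → R) →ₗ[R] Y), Function.Surjective p := Module.Finite.exists_fin' R Y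

variable {R : Type u} [CommRing R] [IsNoetherianRing R] {X : Type u} [AddCommGroup X] [Module R X]

lemma exact_ker {B C : Type u} [AddCommGroup B] [Module R B]
    [AddCommGroup C] [Module R C] (g : B →ₗ[R] C) :
    Function.Exact (LinearMap.ker g).subtype g := LinearMap.exact_subtype_ker_map g

lemma dge_dual {d : ℕ} (hR : dge (R := R) X d R) : ∀ (Y : Type u) [AddCommGroup Y]
    [Module R Y] [Module.Finite R Y], EV (R := R) Y → dge (R := R) X d (Module.Dual R Y) := by
  suffices ∀ j ≤ d, ∀ (Y : Type u) [AddCommGroup Y]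
    [Module R Y] [Module.Finite R Y], EV (R := R) Y → dge (R := R) X j (Module.Dual R Y) from
    this d le_rfl
  intro j
  induction j with
  | zero => intro _ Y _ _ _ _ i hi; omega
  | succ j ih =>
    intro hj Y _ _ _ hY
    obtain ⟨n, p, hp⟩ := exists_cover R Y
    have hi := (LinearMap.ker p).injective_subtype
    have he := exact_ker p
    refine dge_ker (dual_inj hp) (dual_surj hi hp he (hY 0)) (dual_exact hp he)
      (d := d) (dge_free hR) (ih (by omega) _ (EV_ker hi hp he EV_proj hY)) hj

end St9
end

open CategoryTheory

noncomputable section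
namespace St9
open scoped Pointwise

section S3
variable {R : Type u} [CommRing R] [IsNoetherianRing R] [IsLocalRing R]

lemma dim_ineq (n : ℕ) : ∀ (E N : Type u) [AddCommGroup E] [Module R E] [AddCommGroup N]
    [Module R N] [Module.Finite R E] [Module.Finite R N] [Nontrivial E],
    Module.support R E ⊆ Module.support R N → dge (R := R) E n N →
    Module.supportDim R E + (n : WithBot ℕ∞) ≤ Module.supportDim R N := by
  induction n with
  | zero =>
    intro E N _ _ _ _ _ _ _ hs _
    simp only [Nat.cast_zero, add_zero]
    exact Order.krullDim_le_of_strictMono (Set.inclusion hs) (fun _ _ h => h)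
  | succ n ih =>
    intro E N _ _ _ _ _ _ _ hs hd
    have h0 := ex_zero_iff.1 (hd 0 (by omega))
    obtain ⟨x, hx, hreg⟩ := IsSMulRegular.subsingleton_linearMap_iff.1 h0
    have hxm : x ∈ IsLocalRing.maximalIdeal R := by
      rw [IsLocalRing.mem_maximalIdeal, mem_nonunits_iff]
      intro hu
      obtain ⟨e, he⟩ := exists_ne (0 : E)
      apply he
      have := Module.mem_annihilator.1 hx e
      exact (hu.smul_eq_zero).1 this
    have hsupp : Module.support R E ⊆ Module.support R (QuotSMulTop x N) := by
      rw [Module.support_quotSMulTop]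
      refine Set.subset_inter hs ?_
      rw [Module.support_eq_zeroLocus]
      exact PrimeSpectrum.zeroLocus_anti_mono (by simpa using hx)
    have h1 := ih E (QuotSMulTop x N) hsupp (fun i hi => by
      refine cov3s (f := LinearMap.lsmul R N x) (g := (x • (⊤ : Submodule R N)).mkQ) hreg
        (Submodule.mkQ_surjective _) ?_ (hd i (by omega)) (hd (i+1) (by omega))
      rw [LinearMap.exact_iff, Submodule.ker_mkQ]
      ext y
      simp [Submodule.mem_smul_pointwise_iff_exists, LinearMap.mem_range])
    have h2 := Module.supportDim_quotSMulTop_succ_eq_supportDim hreg hxm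
    rw [← h2, Nat.cast_add, Nat.cast_one, ← add_assoc]
    gcongr

lemma depth_bound {d n : ℕ} (hdim : ringKrullDim R = ((d : ℕ∞) : WithBot ℕ∞)) (E : Type u)
    [AddCommGroup E] [Module R E] [Module.Finite R E] [Nontrivial E] (hE : dge (R := R) E n R) :
    ∃ t, hasD (R := R) (R ⧸ IsLocalRing.maximalIdeal R) t E ∧ t + n ≤ d := by
  set k := R ⧸ IsLocalRing.maximalIdeal R with hk
  have : Nontrivial k := Ideal.Quotient.nontrivial_iff.2 (Ideal.IsPrime.ne_top inferInstance)
  have h1 := dim_ineq n E R (by rw [Module.support_eq_zeroLocus, Module.support_eq_zeroLocus]; exact PrimeSpectrum.zeroLocus_anti_mono (by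
    intro r hr
    have : r • (1 : R) = 0 := Module.mem_annihilator.1 hr 1
    simp at this; subst this; simp)) hE
  rw [Module.supportDim_self_eq_ringKrullDim, hdim] at h1
  have hs : Module.support R k ⊆ Module.support R E := by
    rw [Module.support_eq_zeroLocus, Module.support_eq_zeroLocus]
    apply PrimeSpectrum.zeroLocus_anti_mono
    rw [Ideal.annihilator_quotient]
    intro r hr
    refine IsLocalRing.le_maximalIdeal ?_ hr
    intro h
    rw [Module.annihilator_eq_top_iff] at h
    exact not_subsingleton E h
  have hk0 : (0 : WithBot ℕ∞) ≤ Module.supportDim R k := by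
    have := Module.supportDim_ne_bot_of_nontrivial R k
    rw [← WithBot.coe_unbot _ this]
    exact WithBot.coe_le_coe.2 zero_le
  have key : ∀ t : ℕ, dge (R := R) k t E → t + n ≤ d := by
    intro t ht
    have h2 := dim_ineq t k E hs ht
    have h3 : (t : WithBot ℕ∞) + n ≤ d := by
      calc (t : WithBot ℕ∞) + n = 0 + t + n := by rw [zero_add]
        _ ≤ Module.supportDim R k + t + n := by gcongr
        _ ≤ Module.supportDim R E + n := by gcongr
        _ ≤ d := h1
    exact_mod_cast h3
  have : ¬ dge (R := R) k (d + 1) E := fun h => by have := key _ h; omega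
  obtain ⟨t, _, ht⟩ := exists_hasD this
  exact ⟨t, ht, key t ht.1⟩

end S3
end St9
end

open CategoryTheory

noncomputable section
namespace St9

section S4
variable {R : Type u} [CommRing R]

lemma isG0_iff (Y : Type u) [AddCommGroup Y] [Module R Y] : IsGDimZero R Y ↔
    Module.Finite R Y ∧ Function.Bijective (Module.Dual.eval R Y) ∧ EV (R := R) Y ∧
      EV (R := R) (Module.Dual R Y) := by
  unfold IsGDimZero EV
  refine and_congr Iff.rfl (and_congr Iff.rfl (and_congr ?_ ?_)) <;>
  · constructor
    · intro h i
      exact (extM_iff _ _ _).1 (h (i + 1) (by omega))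
    · intro h i hi
      obtain ⟨j, rfl⟩ : ∃ j, i = j + 1 := ⟨i - 1, by omega⟩
      exact (extM_iff _ _ _).2 (h j)

variable {A B C : Type u} [AddCommGroup A] [Module R A] [AddCommGroup B] [Module R B]
  [AddCommGroup C] [Module R C]

lemma g0_proj [Module.Finite R A] [Module.Projective R A] : IsGDimZero R A := by
  rw [isG0_iff]
  exact ⟨inferInstance, Module.bijective_dual_eval R A, EV_proj, EV_proj⟩

lemma eval_nat (f : A →ₗ[R] B) (a : A) :
    f.dualMap.dualMap (Module.Dual.eval R A a) = Module.Dual.eval R B (f a) := rfl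

section
variable {f : A →ₗ[R] B} {g : B →ₗ[R] C} (hf : Function.Injective f)
    (hg : Function.Surjective g) (h : Function.Exact f g)
include hf hg h

lemma g0_ker [IsNoetherianRing R] (hB : IsGDimZero R B) (hC : IsGDimZero R C) :
    IsGDimZero R A := by
  rw [isG0_iff] at *
  obtain ⟨fB, rB, eB, dB⟩ := hB
  obtain ⟨fC, rC, eC, dC⟩ := hC
  have s := dual_surj hf hg h (eC 0)
  have i := dual_inj hg
  have e := dual_exact hg h
  refine ⟨Module.Finite.of_injective f hf, ⟨?_, ?_⟩, EV_ker hf hg h eB eC, ?_⟩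
  · rw [injective_iff_map_eq_zero]
    intro a ha
    have := eval_nat f a
    rw [ha, map_zero] at this
    have h2 : f a = 0 := rB.1 (by rw [← this, map_zero])
    exact hf (by rw [h2, map_zero])
  · intro α
    obtain ⟨b, hb⟩ := rB.2 (f.dualMap.dualMap α)
    have hgb : g b = 0 := by
      apply rC.1
      rw [← eval_nat, hb, map_zero]
      ext ψ
      have : f.dualMap (g.dualMap ψ) = 0 := e.apply_apply_eq_zero ψ
      simp [LinearMap.dualMap_apply, this]
    obtain ⟨a, rfl⟩ := (h b).1 hgb
    refine ⟨a, dual_inj s ?_⟩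
    rw [eval_nat, hb]
  · intro j
    cases j with
    | zero =>
      refine con3ext i s e (fun γ => ?_) (dB 0)
      obtain ⟨c, rfl⟩ := rC.2 γ
      obtain ⟨b, rfl⟩ := hg c
      exact ⟨Module.Dual.eval R B b, rfl⟩
    | succ j => exact con3s i s e (dC j) (dB (j + 1))

lemma g0_mid [Module.Finite R B] (hA : IsGDimZero R A) (hC : IsGDimZero R C) :
    IsGDimZero R B := by
  rw [isG0_iff] at *
  obtain ⟨fA, rA, eA, dA⟩ := hA
  obtain ⟨fC, rC, eC, dC⟩ := hC
  have s := dual_surj hf hg h (eC 0)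
  have i := dual_inj hg
  have e := dual_exact hg h
  refine ⟨inferInstance, ⟨?_, ?_⟩, fun j => con2s hf hg h (eA j) (eC j),
    fun j => con2s i s e (dC j) (dA j)⟩
  · rw [injective_iff_map_eq_zero]
    intro b hb
    have h1 := eval_nat g b
    rw [hb, map_zero] at h1
    have h2 : g b = 0 := rC.1 (by rw [← h1, map_zero])
    obtain ⟨a, rfl⟩ := (h b).1 h2
    rw [← eval_nat] at hb
    have h3 : Module.Dual.eval R A a = 0 := dual_inj s (by rw [hb, map_zero])
    have : a = 0 := rA.1 (by rw [h3, map_zero])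
    rw [this, map_zero]
  · intro β
    obtain ⟨c, hc⟩ := rC.2 (g.dualMap.dualMap β)
    obtain ⟨b, rfl⟩ := hg c
    have : g.dualMap.dualMap (β - Module.Dual.eval R B b) = 0 := by
      rw [map_sub, eval_nat, hc, sub_self]
    obtain ⟨α, hα⟩ := (dual_exact s e _).1 this
    obtain ⟨a, rfl⟩ := rA.2 α
    refine ⟨f a + b, ?_⟩
    rw [map_add, ← eval_nat, hα, sub_add_cancel]

end

variable [IsNoetherianRing R]

lemma g0_congr (e : A ≃ₗ[R] B) (hB : IsGDimZero R B) : IsGDimZero R A := by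
  refine g0_ker (f := e.toLinearMap) (g := (0 : B →ₗ[R] PUnit.{u+1})) e.injective
    (fun x => ⟨0, rfl⟩) ?_ hB g0_proj
  intro y
  simp only [LinearMap.zero_apply, true_iff]
  exact ⟨e.symm y, by simp⟩

lemma gd_congr {m : ℕ} (e : A ≃ₗ[R] B) (hB : GDimLE R m (ModuleCat.of R B)) :
    GDimLE R m (ModuleCat.of R A) := by
  cases m with
  | zero => exact g0_congr e hB
  | succ m =>
    obtain ⟨G, f, hG, hs, hk⟩ := hB
    refine ⟨G, e.symm.toLinearMap ∘ₗ f, hG, e.symm.surjective.comp hs, ?_⟩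
    rw [LinearEquiv.ker_comp]
    exact hk

lemma gd_ker {m : ℕ} (w : A →ₗ[R] B) (hw : Function.Surjective w) (hB : IsGDimZero R B)
    (hA : GDimLE R m (ModuleCat.of R A)) : GDimLE R m (ModuleCat.of R (LinearMap.ker w)) := by
  cases m with
  | zero => exact g0_ker (LinearMap.ker w).injective_subtype hw (exact_ker w) hA hB
  | succ m =>
    obtain ⟨G, f, hG, hs, hk⟩ := hA
    have hws : Function.Surjective (w ∘ₗ f) := hw.comp hs
    have hmap : ∀ x ∈ LinearMap.ker (w ∘ₗ f), f x ∈ LinearMap.ker w := fun x hx => hx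
    let f' : LinearMap.ker (w ∘ₗ f) →ₗ[R] LinearMap.ker w := f.restrict hmap
    refine ⟨ModuleCat.of R (LinearMap.ker (w ∘ₗ f)), f', ?_, ?_, ?_⟩
    · exact g0_ker (LinearMap.ker (w ∘ₗ f)).injective_subtype hws (exact_ker _) hG hB
    · rintro ⟨a, ha⟩
      obtain ⟨x, rfl⟩ := hs a
      exact ⟨⟨x, ha⟩, rfl⟩
    · let φ : LinearMap.ker f' →ₗ[R] LinearMap.ker f :=
        LinearMap.codRestrict _ ((LinearMap.ker (w ∘ₗ f)).subtype ∘ₗ (LinearMap.ker f').subtype)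
          (by rintro ⟨⟨x, hx⟩, hx'⟩
              exact congrArg Subtype.val hx')
      refine gd_congr (LinearEquiv.ofBijective φ ⟨?_, ?_⟩) hk
      · intro x y hxy
        have hv : ((x : LinearMap.ker (w ∘ₗ f)) : G) = ((y : LinearMap.ker (w ∘ₗ f)) : G) :=
          congrArg (fun z : LinearMap.ker f => (z : G)) hxy
        exact Subtype.ext (Subtype.ext hv)
      · rintro ⟨x, hx⟩
        have hx0 : f x = 0 := hx
        refine ⟨⟨⟨x, by simp [hx0]⟩, Subtype.ext hx0⟩, rfl⟩

lemma gd_prod {m : ℕ} [Module.Finite R B] [Module.Projective R B]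
    (hA : GDimLE R m (ModuleCat.of R A)) : GDimLE R m (ModuleCat.of R (A × B)) := by
  have g0 : ∀ {A : Type u} [AddCommGroup A] [Module R A], IsGDimZero R A →
      IsGDimZero R (A × B) := by
    intro A _ _ hA
    haveI := hA.1
    refine g0_mid (f := LinearMap.inl R A B) (g := LinearMap.snd R A B) LinearMap.inl_injective
      LinearMap.snd_surjective ?_ hA g0_proj
    exact Function.Exact.inl_snd
  cases m with
  | zero => exact g0 hA
  | succ m =>
    obtain ⟨G, f, hG, hs, hk⟩ := hA
    refine ⟨ModuleCat.of R (G × B), LinearMap.prodMap f LinearMap.id, g0 hG, ?_, ?_⟩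
    · exact hs.prodMap Function.surjective_id
    · let φ : LinearMap.ker (LinearMap.prodMap f (LinearMap.id : B →ₗ[R] B)) →ₗ[R] LinearMap.ker f :=
        LinearMap.codRestrict _ (LinearMap.fst R G B ∘ₗ (LinearMap.ker _).subtype)
          (by rintro ⟨⟨x, y⟩, hx⟩
              exact congrArg Prod.fst hx)
      refine gd_congr (LinearEquiv.ofBijective φ ⟨?_, ?_⟩) hk
      · rintro ⟨⟨x, y⟩, hx⟩ ⟨⟨x', y'⟩, hx'⟩ hxy
        have h1 : y = 0 := congrArg Prod.snd hx
        have h2 : y' = 0 := congrArg Prod.snd hx'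
        have h3 : x = x' := congrArg Subtype.val hxy
        subst h1 h2 h3
        rfl
      · rintro ⟨x, hx⟩
        have hx0 : f x = 0 := hx
        exact ⟨⟨⟨x, 0⟩, by simp [hx0]⟩, rfl⟩

lemma schanuel {m : ℕ} [Module.Finite R B] [Module.Projective R B] (p : B →ₗ[R] A)
    (hp : Function.Surjective p) (hA : GDimLE R (m + 1) (ModuleCat.of R A)) :
    GDimLE R m (ModuleCat.of R (LinearMap.ker p)) := by
  obtain ⟨G, f, hG, hs, hk⟩ := hA
  obtain ⟨h, hh⟩ := Module.projective_lifting_property f p hs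
  have hh' : ∀ q, f (h q) = p q := fun q => congrArg (fun φ => φ q) hh
  let w : (LinearMap.ker f × B) →ₗ[R] G := LinearMap.coprod (LinearMap.ker f).subtype h
  have hw : Function.Surjective w := by
    intro g
    obtain ⟨q, hq⟩ := hp (f g)
    refine ⟨(⟨g - h q, ?_⟩, q), ?_⟩
    · rw [LinearMap.mem_ker, map_sub, hh', hq]; exact sub_self _
    · simp [w]
  have h1 := gd_ker w hw hG (gd_prod (B := B) hk)
  let φ : LinearMap.ker w →ₗ[R] LinearMap.ker p :=
    LinearMap.codRestrict _ (LinearMap.snd R (LinearMap.ker f) B ∘ₗ (LinearMap.ker w).subtype)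
      (by rintro ⟨⟨⟨x, hx⟩, q⟩, hq⟩
          have h2 : x + h q = 0 := hq
          have h3 : f x = 0 := hx
          have h4 : f (x + h q) = 0 := by rw [h2]; exact map_zero f
          rw [map_add, h3, hh'] at h4
          exact (zero_add (p q)).symm.trans h4)
  refine gd_congr (LinearEquiv.ofBijective φ ⟨?_, ?_⟩).symm h1
  · rintro ⟨⟨⟨x, hx⟩, q⟩, hq⟩ ⟨⟨⟨x', hx'⟩, q'⟩, hq'⟩ hxy
    have h3 : q = q' := congrArg Subtype.val hxy
    subst h3
    have h2 : x + h q = 0 := hq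
    have h2' : x' + h q = 0 := hq'
    have : x = x' := add_right_cancel (h2.trans h2'.symm)
    subst this
    rfl
  · rintro ⟨q, hq⟩
    have hq0 : p q = 0 := hq
    refine ⟨⟨(⟨-h q, ?_⟩, q), ?_⟩, rfl⟩
    · rw [LinearMap.mem_ker, map_neg, hh', hq0]; exact neg_zero
    · rw [LinearMap.mem_ker]; simp [w]

end S4
end St9
end

open CategoryTheory

noncomputable section
namespace St9

section S5
variable {R : Type u} [CommRing R] [IsNoetherianRing R]
variable {X : Type u} [AddCommGroup X] [Module R X]
variable {Y : Type u} [AddCommGroup Y] [Module R Y] [Module.Finite R Y]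

lemma finite_dual : Module.Finite R (Module.Dual R Y) := by
  obtain ⟨n, p, hp⟩ := exists_cover R Y
  exact Module.Finite.of_injective p.dualMap (dual_inj hp)

lemma zero_of_cov {A B C : Type u} [AddCommGroup A] [Module R A] [AddCommGroup B] [Module R B]
    [AddCommGroup C] [Module R C] {f : A →ₗ[R] B} {g : B →ₗ[R] C} (hf : Function.Injective f)
    (hg : Function.Surjective g) (h : Function.Exact f g) {d : ℕ} (hC : dge (R := R) X d C)
    {x : EX R d X A} (hx : push f x = 0) : x = 0 := by
  cases d with
  | zero => exact cov0 hf hx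
  | succ d => exact cov1 hf hg h (hC d (by omega)) hx

lemma claim_inj {d : ℕ} (hR : dge (R := R) X d R) (hY : EV (R := R) Y)
    {η : EX R d X (Module.Dual R Y)} (hη : ∀ y : Y, push (Module.Dual.eval R Y y) η = 0) :
    η = 0 := by
  obtain ⟨n, p, hp⟩ := exists_cover R Y
  have hi := (LinearMap.ker p).injective_subtype
  have he := exact_ker p
  refine zero_of_cov (dual_inj hp) (dual_surj hi hp he (hY 0)) (dual_exact hp he)
    (dge_dual hR _ (EV_ker hi hp he EV_proj hY)) ?_
  apply push_ext_free
  intro φ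
  obtain ⟨q, rfl⟩ := (Module.bijective_dual_eval R (Fin n → R)).2 φ
  rw [← push_comp]
  exact hη (p q)

lemma lemma_K {d : ℕ} (hR : dge (R := R) X d R) (hY : EV (R := R) Y) (G : Y →ₗ[R] EX R d X R) :
    ∃ ξ : EX R d X (Module.Dual R Y), ∀ y : Y, push (Module.Dual.eval R Y y) ξ = G y := by
  obtain ⟨n, p, hp⟩ := exists_cover R Y
  have hi := (LinearMap.ker p).injective_subtype
  have he := exact_ker p
  let b := Pi.basisFun R (Fin n)
  let ζ : EX R d X (Module.Dual R (Fin n → R)) :=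
    ∑ j, push (LinearMap.toSpanSingleton R _ (b.coord j)) (G (p (b j)))
  have hζ : ∀ q, push (Module.Dual.eval R (Fin n → R) q) ζ = G (p q) := by
    intro q
    have h1 : ∀ j, push (Module.Dual.eval R (Fin n → R) q)
        (push (LinearMap.toSpanSingleton R _ (b.coord j)) (G (p (b j)))) =
        b.coord j q • G (p (b j)) := by
      intro j
      rw [← push_comp]
      have : (Module.Dual.eval R (Fin n → R) q) ∘ₗ (LinearMap.toSpanSingleton R _ (b.coord j)) =
        b.coord j q • LinearMap.id := by
        ext; simp
      rw [this, push_smul, push_id]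
    have h2 : push (Module.Dual.eval R (Fin n → R) q) ζ = pushL d X (Module.Dual.eval R (Fin n → R) q) ζ := rfl
    rw [h2, map_sum]
    have h3 := b.sum_repr q
    conv_rhs => rw [← h3, map_sum, map_sum]
    refine Finset.sum_congr rfl fun j _ => ?_
    rw [map_smul, map_smul]
    exact h1 j
  have hz : push (LinearMap.ker p).subtype.dualMap ζ = 0 := by
    refine claim_inj hR (EV_ker hi hp he EV_proj hY) fun y => ?_
    rw [← push_comp]
    have := hζ (y : Fin n → R)
    rw [show p (y : Fin n → R) = 0 from y.2, map_zero] at this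
    exact this
  obtain ⟨ξ, hξ⟩ := cov2 (dual_inj hp) (dual_surj hi hp he (hY 0)) (dual_exact hp he) hz
  refine ⟨ξ, fun y => ?_⟩
  obtain ⟨q, rfl⟩ := hp y
  rw [← hζ q, ← hξ, ← push_comp]
  rfl

variable [IsLocalRing R]

lemma exists_to_k (E : Type u) [AddCommGroup E] [Module R E] [Module.Finite R E] [Nontrivial E] :
    ∃ φ : E →ₗ[R] (R ⧸ IsLocalRing.maximalIdeal R), Function.Surjective φ := by
  obtain ⟨N, hN, _⟩ := (eq_top_or_exists_le_coatom (⊥ : Submodule R E)).resolve_left bot_ne_top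
  have hs : IsSimpleModule R (E ⧸ N) := isSimpleModule_iff_isCoatom.2 hN
  obtain ⟨I, hI, ⟨e⟩⟩ := isSimpleModule_iff_quot_maximal.1 hs
  obtain rfl := IsLocalRing.eq_maximalIdeal hI
  exact ⟨e.toLinearMap ∘ₗ N.mkQ, e.surjective.comp N.mkQ_surjective⟩

lemma smul_ext_k {d : ℕ} {N : Type u} [AddCommGroup N] [Module R N] {I : Ideal R} (r : R) (hr : r ∈ I)
    (x : EX R d (R ⧸ I) N) : r • x = 0 := by
  have h1 : (r • LinearMap.id : (R ⧸ I) →ₗ[R] (R ⧸ I)) = 0 := by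
    ext
    simp only [LinearMap.smul_apply, LinearMap.id_apply, LinearMap.comp_apply, LinearMap.zero_apply]
    change Ideal.Quotient.mk I (r • 1) = 0
    rw [Ideal.Quotient.eq_zero_iff_mem]
    simpa using hr
  have h2 : r • (𝟙 (ModuleCat.of R (R ⧸ I))) = 0 := by
    ext1
    exact h1
  have h3 : r • x = (Abelian.Ext.mk₀ (r • (𝟙 (ModuleCat.of R (R ⧸ I))))).comp x (zero_add d) := by
    rw [Abelian.Ext.mk₀_smul, Abelian.Ext.smul_comp, Abelian.Ext.mk₀_id_comp]
  rw [h3, h2, Abelian.Ext.mk₀_zero, Abelian.Ext.zero_comp]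

lemma key_surj {d : ℕ} (hR : hasD (R := R) (R ⧸ IsLocalRing.maximalIdeal R) d R)
    {Z P C : Type u} [AddCommGroup Z] [Module R Z] [AddCommGroup P] [Module R P]
    [AddCommGroup C] [Module R C] [Module.Finite R P] [Module.Free R P] {f : Z →ₗ[R] P}
    {g : P →ₗ[R] C} (hf : Function.Injective f) (hg : Function.Surjective g)
    (h : Function.Exact f g) (hZ : IsGDimZero R Z)
    (hC : dge (R := R) (R ⧸ IsLocalRing.maximalIdeal R) d C) :
    Function.Surjective f.dualMap := by
  set k := R ⧸ IsLocalRing.maximalIdeal R with hk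
  rw [isG0_iff] at hZ
  obtain ⟨fZ, rZ, eZ, dZ⟩ := hZ
  have fZ' : Module.Finite R (Module.Dual R Z) := finite_dual
  have main : ∀ G : Module.Dual R Z →ₗ[R] EX R d k R, G ∘ₗ f.dualMap = 0 → G = 0 := by
    intro G hG
    obtain ⟨ξ, hξ⟩ := lemma_K hR.1 dZ G
    let ε := LinearEquiv.ofBijective _ rZ
    have hφ : ∀ φ : Module.Dual R Z, push φ (push ε.symm.toLinearMap ξ) = G φ := by
      intro φ
      rw [← push_comp, ← hξ φ]
      congr 1
      ext α
      obtain ⟨z, rfl⟩ := rZ.2 α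
      have : ε.symm (Module.Dual.eval R Z z) = z := ε.symm_apply_apply z
      simp [this]
    have h0 : push ε.symm.toLinearMap ξ = 0 := by
      refine zero_of_cov hf hg h hC ?_
      apply push_ext_free
      intro ψ
      rw [← push_comp]
      rw [show ψ ∘ₗ f = f.dualMap ψ from rfl, hφ]
      exact congrArg (fun T => T ψ) hG
    ext1 φ
    rw [← hφ, h0, push_map_zero, LinearMap.zero_apply]
  by_contra hns
  rw [← LinearMap.range_eq_top] at hns
  have hnt : Nontrivial (Module.Dual R Z ⧸ LinearMap.range f.dualMap) :=
    Submodule.Quotient.nontrivial_iff.2 hns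
  obtain ⟨φ, hφ⟩ := exists_to_k (R := R) (Module.Dual R Z ⧸ LinearMap.range f.dualMap)
  have hV := hR.2
  rw [not_subsingleton_iff_nontrivial] at hV
  obtain ⟨v, hv⟩ := exists_ne (0 : EX R d k R)
  let ψ : k →ₗ[R] EX R d k R := Submodule.liftQ _ (LinearMap.toSpanSingleton R _ v) (by
    intro r hr
    rw [LinearMap.mem_ker, LinearMap.toSpanSingleton_apply]
    exact smul_ext_k r hr v)
  have hz := main (ψ ∘ₗ φ ∘ₗ (LinearMap.range f.dualMap).mkQ) (by
    rw [LinearMap.comp_assoc, LinearMap.comp_assoc, LinearMap.range_mkQ_comp]; simp)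
  obtain ⟨e, he⟩ := hφ (Submodule.Quotient.mk 1)
  obtain ⟨y, rfl⟩ := Submodule.mkQ_surjective _ e
  apply hv
  have := congrArg (fun T => T y) hz
  simp only [LinearMap.comp_apply, he, LinearMap.zero_apply] at this
  rw [← this]
  change v = (1 : R) • v
  rw [one_smul]

end S5
end St9
end

open CategoryTheory

noncomputable section
namespace St9

section S6
variable {R : Type u} [CommRing R]

lemma dd_zero {M : Type u} [AddCommGroup M] [Module R M] (F : MinRes R M) (i : ℕ) :
    ModuleCat.ofHom (F.d (i + 1)) ≫ ModuleCat.ofHom (F.d i) = 0 := by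
  ext x
  have : F.d (i + 1) x ∈ LinearMap.ker (F.d i) := by rw [← F.exact i]; exact ⟨x, rfl⟩
  exact this

/-- The complex attached to a minimal resolution. -/
def cx {M : Type u} [AddCommGroup M] [Module R M] (F : MinRes R M) : ChainComplex (ModuleCat.{u} R) ℕ :=
  ChainComplex.of F.P (fun i => ModuleCat.ofHom (F.d i)) (dd_zero F)

lemma cx_d {M : Type u} [AddCommGroup M] [Module R M] (F : MinRes R M) (i : ℕ) :
    (cx F).d (i + 1) i = ModuleCat.ofHom (F.d i) := 
  ChainComplex.of_d F.P (fun i => ModuleCat.ofHom (F.d i)) i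

lemma cx_exact {M : Type u} [AddCommGroup M] [Module R M] (F : MinRes R M) (n : ℕ) :
    (cx F).ExactAt (n + 1) := by
  rw [HomologicalComplex.exactAt_iff' _ (n + 1 + 1) (n + 1) n (by simp) (by simp)]
  rw [ShortComplex.moduleCat_exact_iff]
  intro x hx
  have h1 : (cx F).d (n + 1) n x = 0 := hx
  rw [cx_d] at h1
  have h2 : x ∈ LinearMap.range (F.d (n + 1)) := by rw [F.exact n]; exact h1
  obtain ⟨y, hy⟩ := h2
  refine ⟨y, ?_⟩
  change (cx F).d (n + 1 + 1) (n + 1) y = x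
  rw [cx_d]
  exact hy

lemma exact0' {M : Type u} [AddCommGroup M] [Module R M] (F : MinRes R M) (x : F.P 0)
    (hx : F.ε x = 0) : ∃ y, F.d 0 y = x := by
  have h2 : x ∈ LinearMap.range (F.d 0) := by rw [F.exact0]; exact hx
  exact h2

/-- augmentation -/
def eps0 {M : Type u} [AddCommGroup M] [Module R M] (F : MinRes R M) :
    (cx F).X 0 ⟶ ModuleCat.of R M := ModuleCat.ofHom F.ε

/-- The projective resolution attached to a minimal resolution. -/
def pres {M : Type u} [AddCommGroup M] [Module R M] (F : MinRes R M) :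
    ProjectiveResolution (ModuleCat.of R M) where
  complex := cx F
  projective := fun n => by
    have := F.projective n
    exact ModuleCat.projective_of_categoryTheory_projective (F.P n)
  π := (ChainComplex.toSingle₀Equiv (cx F) (ModuleCat.of R M)).symm ⟨eps0 F, by
    rw [cx_d]
    ext x
    have : F.d 0 x ∈ LinearMap.ker F.ε := by rw [← F.exact0]; exact ⟨x, rfl⟩
    exact this⟩
  quasiIso := ⟨fun n => by
    cases n with
    | zero =>
      rw [ChainComplex.quasiIsoAt₀_iff, ShortComplex.quasiIso_iff_of_zeros']
      · constructor
        · rw [ShortComplex.moduleCat_exact_iff]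
          intro x hx
          obtain ⟨y, hy⟩ := exact0' F x hx
          refine ⟨y, ?_⟩
          change (cx F).d 1 0 y = x
          rw [cx_d]
          exact hy
        · rw [ModuleCat.epi_iff_surjective]
          exact F.surj
      all_goals rfl
    | succ n =>
      rw [quasiIsoAt_iff_exactAt']
      · exact cx_exact F n
      · apply ChainComplex.exactAt_succ_single_obj⟩

/-- homology of a short complex of modules -/
lemma homology_equiv (S : ShortComplex (ModuleCat.{u} R)) {D : Type u} [AddCommGroup D]
    [Module R D] (W : Submodule R D) (ψ : D →ₗ[R] S.X₂)
    (h1 : ∀ x, S.g x = 0 ↔ ∃ y, ψ y = x) (h2 : ∀ y, y ∈ W ↔ ∃ z, S.f z = ψ y) :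
    Nonempty ((S.homology : Type u) ≃ₗ[R] (D ⧸ W)) := by
  let ψ' : D →ₗ[R] LinearMap.ker S.g.hom := LinearMap.codRestrict _ ψ (fun y => (h1 _).2 ⟨y, rfl⟩)
  let T : D →ₗ[R] (LinearMap.ker S.g.hom ⧸ LinearMap.range S.moduleCatToCycles) :=
    (LinearMap.range S.moduleCatToCycles).mkQ ∘ₗ ψ'
  have hT : Function.Surjective T := by
    refine (Submodule.mkQ_surjective _).comp ?_
    rintro ⟨x, hx⟩
    obtain ⟨y, hy⟩ := (h1 x).1 hx
    exact ⟨y, Subtype.ext hy⟩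
  have hk : LinearMap.ker T = W := by
    ext y
    rw [LinearMap.mem_ker, h2]
    change (LinearMap.range S.moduleCatToCycles).mkQ (ψ' y) = 0 ↔ _
    rw [Submodule.mkQ_apply, Submodule.Quotient.mk_eq_zero]
    constructor
    · rintro ⟨z, hz⟩
      exact ⟨z, congrArg Subtype.val hz⟩
    · rintro ⟨z, hz⟩
      exact ⟨z, Subtype.ext hz⟩
  exact ⟨S.moduleCatHomologyIso.toLinearEquiv.trans
    ((T.quotKerEquivOfSurjective hT).symm.trans (Submodule.quotEquivOfEq _ _ hk))⟩

variable {M : Type u} [AddCommGroup M] [Module R M] (F : MinRes R M)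

/-- The syzygy inside `P j`. -/
abbrev XX (j : ℕ) : Submodule R (F.P j) := LinearMap.range (F.d j)

/-- The quotient computing Ext. -/
abbrev EE (j : ℕ) : Type u :=
  Module.Dual R (XX F j) ⧸ LinearMap.range (XX F j).subtype.dualMap

lemma ext_equiv (j : ℕ) : Nonempty (extM R (j + 1) M R ≃ₗ[R] EE F j) := by
  let K := (pres F).complex.linearYonedaObj R (ModuleCat.of R R)
  let i1 := (pres F).isoExt (R := R) (j + 1) (ModuleCat.of R R)
  let i2 : K.homology (j + 1) ≅ (K.sc' j (j + 1) (j + 2)).homology :=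
    K.homologyIsoSc' j (j+1) (j+2) (by simp) (by simp)
  let ψ : Module.Dual R (XX F j) →ₗ[R] (K.sc' j (j + 1) (j + 2)).X₂ :=
    { toFun := fun χ => (ModuleCat.ofHom (χ ∘ₗ (F.d j).rangeRestrict) : F.P (j + 1) ⟶ ModuleCat.of R R)
      map_add' := fun _ _ => rfl
      map_smul' := fun _ _ => rfl }
  obtain ⟨e⟩ := homology_equiv (K.sc' j (j + 1) (j + 2)) (D := Module.Dual R (XX F j))
    (LinearMap.range (XX F j).subtype.dualMap) ψ (by
      intro x
      have hx : (K.sc' j (j + 1) (j + 2)).g x = 0 ↔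
          (cx F).d (j + 1 + 1) (j + 1) ≫ (x : F.P (j + 1) ⟶ ModuleCat.of R R) = 0 := Iff.rfl
      rw [hx, cx_d]
      have hex : Function.Exact (F.d (j + 1)) (F.d j).rangeRestrict := by
        rw [LinearMap.exact_iff, F.exact, LinearMap.ker_rangeRestrict]
      have := dual_exact (LinearMap.surjective_rangeRestrict (F.d j)) hex
        (ModuleCat.Hom.hom (x : F.P (j + 1) ⟶ ModuleCat.of R R))
      constructor
      · intro h
        obtain ⟨y, hy⟩ := this.1 (congrArg ModuleCat.Hom.hom h)
        exact ⟨y, ModuleCat.hom_ext hy⟩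
      · rintro ⟨y, rfl⟩
        exact ModuleCat.hom_ext (this.2 ⟨y, rfl⟩)) (by
      intro y
      have hx : ∀ z, (K.sc' j (j + 1) (j + 2)).f z =
          ((cx F).d (j + 1) j ≫ (z : F.P j ⟶ ModuleCat.of R R)) := fun z => rfl
      constructor
      · rintro ⟨p, rfl⟩
        let z : (K.sc' j (j + 1) (j + 2)).X₁ := (ModuleCat.ofHom p : F.P j ⟶ ModuleCat.of R R)
        refine ⟨z, ?_⟩
        rw [hx z, cx_d]
        rfl
      · rintro ⟨z, hz⟩
        rw [hx, cx_d] at hz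
        refine ⟨ModuleCat.Hom.hom (z : F.P j ⟶ ModuleCat.of R R), ?_⟩
        refine dual_inj (LinearMap.surjective_rangeRestrict (F.d j)) ?_
        exact congrArg ModuleCat.Hom.hom hz)
  exact ⟨(i1 ≪≫ i2).toLinearEquiv.trans e⟩

end S6
end St9
end

open CategoryTheory

noncomputable section
namespace St9

section S7
variable {R : Type u} [CommRing R] [IsNoetherianRing R]
variable {M : Type u} [AddCommGroup M] [Module R M] (F : MinRes R M)

instance inst_proj (j : ℕ) : Module.Projective R (F.P j) := F.projective j
instance inst_fin (j : ℕ) : Module.Finite R (F.P j) := F.finite j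

lemma gd_XX (m : ℕ) : ∀ j, GDimLE R m (ModuleCat.of R (XX F j)) →
    IsGDimZero R (XX F (j + m)) := by
  induction m with
  | zero => intro j h; exact h
  | succ m ih =>
    intro j h
    have h1 := schanuel (F.d j).rangeRestrict (LinearMap.surjective_rangeRestrict (F.d j)) h
    rw [LinearMap.ker_rangeRestrict, ← F.exact j] at h1
    have h2 := ih (j + 1) h1
    rw [show j + (m + 1) = j + 1 + m by omega]
    exact h2

lemma gd_XX' (m : ℕ) (h : GDimLE R (m + 1) (ModuleCat.of R M)) : IsGDimZero R (XX F m) := by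
  have h1 := schanuel F.ε F.surj h
  rw [← F.exact0] at h1
  have h2 := gd_XX F m 0 h1
  rwa [Nat.zero_add] at h2

/-- the map `φ_j` -/
abbrev ph (j : ℕ) : Module.Dual R (F.P j) →ₗ[R] Module.Dual R (XX F j) := (XX F j).subtype.dualMap

/-- the image of the dual differential -/
abbrev Bd (j : ℕ) : Submodule R (Module.Dual R (F.P (j + 1))) := LinearMap.range (F.d j).dualMap

lemma bd_fact (j : ℕ) : (F.d j).dualMap = (F.d j).rangeRestrict.dualMap ∘ₗ ph F j := rfl

/-- range of `φ_j` is isomorphic to `Bd j`. -/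
lemma bd_equiv (j : ℕ) : Nonempty (LinearMap.range (ph F j) ≃ₗ[R] Bd F j) := by
  have h1 : Bd F j = (LinearMap.range (ph F j)).map (F.d j).rangeRestrict.dualMap := by
    rw [← LinearMap.range_comp, ← bd_fact]
  rw [h1]
  exact ⟨Submodule.equivMapOfInjective _ (dual_inj (LinearMap.surjective_rangeRestrict _)) _⟩

/-- torsionless -/
lemma tl {P : Type u} [AddCommGroup P] [Module R P] [Module.Finite R P] [Module.Projective R P]
    {x : P} (h : ∀ ψ : Module.Dual R P, ψ x = 0) : x = 0 := by
  apply (Module.bijective_dual_eval R P).1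
  rw [map_zero]
  ext ψ
  exact h ψ

lemma dd (j : ℕ) (x : F.P (j + 2)) : F.d j (F.d (j + 1) x) = 0 := by
  have : F.d (j + 1) x ∈ LinearMap.ker (F.d j) := by rw [← F.exact j]; exact ⟨x, rfl⟩
  exact this

lemma dd' (j : ℕ) (x : F.P (j + 1)) (h : F.d j x = 0) : ∃ y, F.d (j + 1) y = x := by
  have : x ∈ LinearMap.range (F.d (j + 1)) := by rw [F.exact j]; exact h
  exact this

lemma bd_exact (j : ℕ) (hs : Function.Surjective (ph F j)) :
    Function.Exact (Bd F j).subtype (F.d (j + 1)).dualMap.rangeRestrict := by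
  rw [LinearMap.exact_iff, LinearMap.ker_rangeRestrict, Submodule.range_subtype]
  have hex : Function.Exact (F.d (j + 1)) (F.d j).rangeRestrict := by
    rw [LinearMap.exact_iff, F.exact, LinearMap.ker_rangeRestrict]
  have h2 := dual_exact (LinearMap.surjective_rangeRestrict (F.d j)) hex
  rw [LinearMap.exact_iff] at h2
  have h3 : LinearMap.ker (F.d (j + 1)).dualMap = LinearMap.range (F.d j).rangeRestrict.dualMap := h2
  rw [h3, Bd, bd_fact, LinearMap.range_comp, LinearMap.range_eq_top.2 hs, Submodule.map_top]

/-- functionals on `Bd (j+1)` are evaluations. -/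
lemma bd_fun (j : ℕ) (γ : Bd F (j + 1) →ₗ[R] R) :
    ∃ q : F.P (j + 2), Module.Dual.eval R (F.P (j + 2)) q ∘ₗ (Bd F (j + 1)).subtype = γ := by
  obtain ⟨p, hp⟩ := (Module.bijective_dual_eval R (F.P (j + 1))).2
    (γ ∘ₗ (F.d (j + 1)).dualMap.rangeRestrict)
  have hp' : ∀ ψ : Module.Dual R (F.P (j + 1)), ψ p = γ ((F.d (j + 1)).dualMap.rangeRestrict ψ) :=
    fun ψ => congrArg (fun T => T ψ) hp
  have h0 : F.d j p = 0 := by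
    apply tl (R := R)
    intro ψ
    have h1 := hp' ((F.d j).dualMap ψ)
    have h2 : (F.d (j + 1)).dualMap.rangeRestrict ((F.d j).dualMap ψ) = 0 := by
      apply Subtype.ext
      ext x
      change ψ (F.d j (F.d (j + 1) x)) = 0
      rw [dd, map_zero]
    rw [h2, map_zero] at h1
    exact h1
  obtain ⟨q, rfl⟩ := dd' F j p h0
  refine ⟨q, ?_⟩
  ext ⟨_, ψ, rfl⟩
  exact hp' ψ

/-- functionals on `range φ` are evaluations. -/
lemma ph_fun (j : ℕ) (γ : LinearMap.range (ph F (j + 1)) →ₗ[R] R) :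
    ∃ q : XX F (j + 1), Module.Dual.eval R (XX F (j + 1)) q ∘ₗ
      (LinearMap.range (ph F (j + 1))).subtype = γ := by
  obtain ⟨p, hp⟩ := (Module.bijective_dual_eval R (F.P (j + 1))).2
    (γ ∘ₗ (ph F (j + 1)).rangeRestrict)
  have hp' : ∀ ψ : Module.Dual R (F.P (j + 1)), ψ p = γ ((ph F (j + 1)).rangeRestrict ψ) :=
    fun ψ => congrArg (fun T => T ψ) hp
  have h0 : F.d j p = 0 := by
    apply tl (R := R)
    intro ψ
    have h1 := hp' ((F.d j).dualMap ψ)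
    have h2 : (ph F (j + 1)).rangeRestrict ((F.d j).dualMap ψ) = 0 := by
      apply Subtype.ext
      ext ⟨_, x, rfl⟩
      change ψ (F.d j (F.d (j + 1) x)) = 0
      rw [dd, map_zero]
    rw [h2, map_zero] at h1
    exact h1
  refine ⟨⟨p, dd' F j p h0⟩, ?_⟩
  ext ⟨_, ψ, rfl⟩
  exact hp' ψ

lemma bd_ext (m : ℕ) (hs : ∀ j < m, Function.Surjective (ph F j)) :
    ∀ j ≤ m, ∀ i, i + 1 < j → Subsingleton (EX R (i + 1) (Bd F j) R) := by
  intro j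
  induction j with
  | zero => intro _ i hi; omega
  | succ j ih =>
    intro hj i hi
    have h1 := (Bd F j).injective_subtype
    have h2 := LinearMap.surjective_rangeRestrict (F.d (j + 1)).dualMap
    have h3 := bd_exact F j (hs j (by omega))
    cases i with
    | zero =>
      obtain ⟨j', rfl⟩ : ∃ j', j = j' + 1 := ⟨j - 1, by omega⟩
      refine con3ext (A := Bd F (j' + 1)) (B := Module.Dual R (F.P (j' + 1 + 1))) (C := Bd F (j' + 1 + 1)) (X := R) h1 h2 h3 (fun γ => ?_) ex_proj
      obtain ⟨q, hq⟩ := bd_fun F j' γ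
      exact ⟨_, hq⟩
    | succ i => exact con3s (f := (Bd F j).subtype) h1 h2 h3 (ih (by omega) i (by omega)) ex_proj

lemma ee_ext (m : ℕ) (hs : ∀ j < m, Function.Surjective (ph F j)) (hX : IsGDimZero R (XX F m)) :
    dge (R := R) (EE F m) (m + 1) R := by
  rw [isG0_iff] at hX
  obtain ⟨fX, rX, eX, dX⟩ := hX
  have h1 := (LinearMap.range (ph F m)).injective_subtype
  have h2 := Submodule.mkQ_surjective (LinearMap.range (ph F m))
  have h3 : Function.Exact (LinearMap.range (ph F m)).subtype (LinearMap.range (ph F m)).mkQ := by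
    rw [LinearMap.exact_iff, Submodule.ker_mkQ, Submodule.range_subtype]
  intro i hi
  match i with
  | 0 =>
    rw [ex_zero_iff]
    refine sub_of fun γ => ?_
    obtain ⟨x, hx⟩ := rX.2 (γ ∘ₗ (LinearMap.range (ph F m)).mkQ)
    have hx' : ∀ χ : Module.Dual R (XX F m), χ x = γ ((LinearMap.range (ph F m)).mkQ χ) :=
      fun χ => congrArg (fun T => T χ) hx
    have hx0 : (x : F.P m) = 0 := by
      apply tl (R := R)
      intro ψ
      have := hx' (ph F m ψ)
      have hq : (LinearMap.range (ph F m)).mkQ (ph F m ψ) = 0 :=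
        (Submodule.Quotient.mk_eq_zero (LinearMap.range (ph F m))).2 (LinearMap.mem_range_self _ ψ)
      rw [hq, map_zero] at this
      exact this
    have hx00 : x = 0 := Subtype.ext hx0
    subst hx00
    ext1
    ext1 χ
    have := hx' χ
    rw [map_zero] at this
    exact this.symm
  | 1 =>
    obtain ⟨m', rfl⟩ : ∃ m', m = m' + 1 := ⟨m - 1, by omega⟩
    refine con3ext (A := LinearMap.range (ph F (m' + 1))) (B := Module.Dual R (XX F (m' + 1))) (C := EE F (m' + 1)) (X := R) h1 h2 h3 (fun γ => ?_) (dX 0)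
    obtain ⟨q, hq⟩ := ph_fun F m' γ
    exact ⟨_, hq⟩
  | i + 2 =>
    obtain ⟨e⟩ := bd_equiv F m
    exact con3s (A := LinearMap.range (ph F m)) (B := Module.Dual R (XX F m)) (C := EE F m) (X := R) h1 h2 h3 ((ex_congr_left e).2 (bd_ext F m hs m le_rfl i (by omega))) (dX (i + 1))

variable [IsLocalRing R]

lemma free_P (j : ℕ) : Module.Free R (F.P j) := Module.free_of_flat_of_isLocalRing


lemma quot_equiv (j : ℕ) : Nonempty ((F.P (j + 1) ⧸ XX F (j + 1)) ≃ₗ[R] XX F j) :=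
  ⟨(Submodule.quotEquivOfEq _ _ (F.exact j)).trans (F.d j).quotKerEquivRange⟩

lemma quot_equiv0 : Nonempty ((F.P 0 ⧸ XX F 0) ≃ₗ[R] M) :=
  ⟨(Submodule.quotEquivOfEq _ _ F.exact0).trans (F.ε.quotKerEquivOfSurjective F.surj)⟩

lemma exact_mkQ {A : Type u} [AddCommGroup A] [Module R A] (N : Submodule R A) :
    Function.Exact N.subtype N.mkQ := by
  rw [LinearMap.exact_iff, Submodule.ker_mkQ, Submodule.range_subtype]

lemma depth_M {d m : ℕ} (hR : hasD (R := R) (R ⧸ IsLocalRing.maximalIdeal R) d R) (hX : IsGDimZero R (XX F m))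
    (hE : Nontrivial (EE F m)) : ∃ c, c + m + 1 = d ∧ hasD (R := R) (R ⧸ IsLocalRing.maximalIdeal R) c M := by
  have hfree := free_P F
  have hP : ∀ j, dge (R := R) (R ⧸ IsLocalRing.maximalIdeal R) d (F.P j) := fun j => dge_free hR.1
  have key : ∀ i j, j + i = m → ∃ c, c + i + 1 = d ∧ hasD (R := R) (R ⧸ IsLocalRing.maximalIdeal R) c (F.P j ⧸ XX F j) := by
    intro i
    induction i with
    | zero =>
      rintro j rfl
      rw [Nat.add_zero] at hX hE
      have hX' := hX
      rw [isG0_iff] at hX'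
      obtain ⟨fX, rX, eX, dX⟩ := hX'
      have hn : ¬ dge (R := R) (R ⧸ IsLocalRing.maximalIdeal R) d (F.P j ⧸ XX F j) := by
        intro h
        have := key_surj hR (XX F j).injective_subtype (Submodule.mkQ_surjective _)
          (exact_mkQ (XX F j)) hX h
        rw [Submodule.Quotient.nontrivial_iff] at hE
        exact hE (LinearMap.range_eq_top.2 this)
      obtain ⟨e, he, hD⟩ := exists_hasD hn
      have hXd : dge (R := R) (R ⧸ IsLocalRing.maximalIdeal R) d (XX F j) := by
        have : Module.Finite R (Module.Dual R (XX F j)) := finite_dual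
        exact (dge_congr (LinearEquiv.ofBijective _ rX)).2 (dge_dual hR.1 _ dX)
      have hup := hasD_up (XX F j).injective_subtype (Submodule.mkQ_surjective _)
          (exact_mkQ (XX F j)) (hP j) hD he
      refine ⟨e, ?_, hD⟩
      by_contra hne
      exact hup.2 (hXd _ (by omega))
    | succ i ih =>
      intro j hj
      obtain ⟨c, hc, hD⟩ := ih (j + 1) (by omega)
      obtain ⟨eq⟩ := quot_equiv F j
      obtain ⟨c', hc', hD'⟩ := hasD_down (XX F j).injective_subtype (Submodule.mkQ_surjective _)
          (exact_mkQ (XX F j)) (hP j) ((hasD_congr eq).1 hD) (by omega)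
      exact ⟨c', by omega, hD'⟩
  obtain ⟨c, hc, hD⟩ := key m 0 (by omega)
  obtain ⟨eq⟩ := quot_equiv0 F
  exact ⟨c, hc, (hasD_congr eq).1 hD⟩

lemma depth_L {d m t : ℕ} (hR : dge (R := R) (R ⧸ IsLocalRing.maximalIdeal R) d R) (hX : IsGDimZero R (XX F m))
    (hs : ∀ j < m, Function.Surjective (ph F j)) (ht : t + (m + 1) ≤ d)
    (hE : hasD (R := R) (R ⧸ IsLocalRing.maximalIdeal R) t (EE F m)) : hasD (R := R) (R ⧸ IsLocalRing.maximalIdeal R) (t + 1 + m) (Bd F 0) := by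
  have hfree := free_P F
  have key : ∀ i j, j + i = m → hasD (R := R) (R ⧸ IsLocalRing.maximalIdeal R) (t + 1 + i) (Bd F j) := by
    intro i
    induction i with
    | zero =>
      rintro j rfl
      rw [Nat.add_zero] at hX hE
      rw [isG0_iff] at hX
      obtain ⟨fX, rX, eX, dX⟩ := hX
      obtain ⟨e⟩ := bd_equiv F j
      exact (hasD_congr e).1 (hasD_up (LinearMap.range (ph F j)).injective_subtype
        (Submodule.mkQ_surjective _) (exact_mkQ _) (dge_dual hR _ eX) hE (by omega))
    | succ i ih =>
      intro j hj
      have h1 := (Bd F j).injective_subtype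
      have h2 := LinearMap.surjective_rangeRestrict (F.d (j + 1)).dualMap
      have h3 := bd_exact F j (hs j (by omega))
      exact hasD_up (c := t + 1 + i) (d := d) h1 h2 h3 (dge_free hR) (ih (j + 1) (by omega)) (by omega)
  exact key m 0 (by omega)

end S7

lemma sInf_attained {p : ℕ → Prop} {n : ℕ}
    (h : sInf {a : ℕ∞ | ∃ k : ℕ, a = k ∧ p k} = (n : ℕ∞)) : p n ∧ ∀ i < n, ¬ p i := by
  have hne : {a : ℕ∞ | ∃ k : ℕ, a = k ∧ p k}.Nonempty := by
    by_contra hh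
    rw [Set.not_nonempty_iff_eq_empty] at hh
    rw [hh, sInf_empty] at h
    exact absurd h (ENat.top_ne_natCast n)
  have hm := csInf_mem hne
  rw [h] at hm
  obtain ⟨k, hk, hk2⟩ := hm
  have : n = k := by exact_mod_cast hk
  subst this
  refine ⟨hk2, fun i hi hp => ?_⟩
  have : (n : ℕ∞) ≤ i := h ▸ sInf_le ⟨i, rfl, hp⟩
  have : n ≤ i := by exact_mod_cast this
  omega

theorem main (R : Type u) [CommRing R] [IsNoetherianRing R] [IsLocalRing R] (d : ℕ)
    (hdim : ringKrullDim R = ((d : ℕ∞) : WithBot ℕ∞))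
    (hCM : rdepth R = (d : ℕ∞))
    (M : Type u) [AddCommGroup M] [Module R M]
    (F : MinRes R M) (n : ℕ) (hG : GDim R M = (n : ℕ∞)) (hred : rgr R M = (n : ℕ∞)) :
    edepth R (IsLocalRing.maximalIdeal R) M +
        edepth R (IsLocalRing.maximalIdeal R) F.lambdaMod =
      (d : ℕ∞) + edepth R (IsLocalRing.maximalIdeal R) (extM R n M R) := by
  have hR : hasD (R := R) (R ⧸ IsLocalRing.maximalIdeal R) d R := (edepth_iff _ _ _).1 hCM
  obtain ⟨hGn, _⟩ := sInf_attained hG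
  obtain ⟨⟨hn0, hne⟩, hlt⟩ := sInf_attained (p := fun k => 0 < k ∧ ¬ Subsingleton (extM R k M R)) hred
  obtain ⟨m, rfl⟩ : ∃ m, n = m + 1 := ⟨n - 1, by omega⟩
  have hX := gd_XX' F m hGn
  have hs : ∀ j < m, Function.Surjective (ph F j) := by
    intro j hj
    have h1 : Subsingleton (extM R (j + 1) M R) := by
      by_contra h
      exact hlt (j + 1) (by omega) ⟨by omega, h⟩
    obtain ⟨e⟩ := ext_equiv F j
    have h2 : Subsingleton (EE F j) := e.symm.toEquiv.subsingleton
    rw [← LinearMap.range_eq_top]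
    exact Submodule.Quotient.subsingleton_iff.1 h2
  obtain ⟨e⟩ := ext_equiv F m
  have hE : Nontrivial (EE F m) := by
    rw [not_subsingleton_iff_nontrivial] at hne
    exact e.symm.toEquiv.nontrivial
  have : Module.Finite R (XX F m) := hX.1
  have : Module.Finite R (Module.Dual R (XX F m)) := finite_dual
  obtain ⟨t, ht, htd⟩ := depth_bound hdim (EE F m) (ee_ext F m hs hX)
  obtain ⟨c, hc, hcD⟩ := depth_M F hR hX hE
  have hL := depth_L F hR.1 hX hs htd ht
  have e1 : edepth R (IsLocalRing.maximalIdeal R) M = (c : ℕ∞) := (edepth_iff _ _ _).2 hcD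
  have e2 : edepth R (IsLocalRing.maximalIdeal R) F.lambdaMod = ((t + 1 + m : ℕ) : ℕ∞) :=
    (edepth_iff _ _ _).2 hL
  have e3 : edepth R (IsLocalRing.maximalIdeal R) (extM R (m + 1) M R) = (t : ℕ∞) :=
    (edepth_iff _ _ _).2 ((hasD_congr e).2 ht)
  rw [e1, e2, e3]
  norm_cast
  omega

end St9
end

section Statements

variable (R : Type u) [CommRing R] [IsNoetherianRing R]

theorem stmt9 [IsLocalRing R] (d : ℕ) (hdim : ringKrullDim R = ((d : ℕ∞) : WithBot ℕ∞))
    (hCM : rdepth R = (d : ℕ∞))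
    (M : Type u) [AddCommGroup M] [Module R M] [Module.Finite R M]
    (F : MinRes R M) (n : ℕ) (hG : GDim R M = (n : ℕ∞)) (hred : rgr R M = (n : ℕ∞)) :
    edepth R (IsLocalRing.maximalIdeal R) M +
        edepth R (IsLocalRing.maximalIdeal R) F.lambdaMod =
      (d : ℕ∞) + edepth R (IsLocalRing.maximalIdeal R) (extM R n M R) := by
  exact St9.main R d hdim hCM M F n hG hred

end Statements
end

section
/- Let M be a horizontally linked R-module of G-dimension n with 0 < n < ∞. Then M is reduced G-perfect if and only if λM satisfies the condition S̃_n. -/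
open CategoryTheory

section Part1

variable {R : Type u} [CommRing R]

/-- vanishing of Ext, via `Abelian.Ext`. -/
abbrev Ev (R : Type u) [CommRing R] (i : ℕ) (M N : Type u) [AddCommGroup M] [Module R M]
    [AddCommGroup N] [Module R N] : Prop :=
  Subsingleton (Abelian.Ext (ModuleCat.of R M) (ModuleCat.of R N) i)

theorem extM_succ_iff (i : ℕ) (X : ModuleCat.{u} R) (P : ProjectiveResolution X)
    (Y : ModuleCat.{u} R) :
    Subsingleton (((Ext R (ModuleCat.{u} R) (i+1)).obj (Opposite.op X)).obj Y) ↔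
    ∀ f : P.complex.X (i+1) ⟶ Y, P.complex.d (i+2) (i+1) ≫ f = 0 →
      ∃ g : P.complex.X i ⟶ Y, P.complex.d (i+1) i ≫ g = f := by
  rw [← ModuleCat.isZero_iff_subsingleton, (P.isoExt (R := R) (i+1) Y).isZero_iff,
    ← HomologicalComplex.exactAt_iff_isZero_homology,
    HomologicalComplex.exactAt_iff' _ i (i+1) (i+2) (by simp) (by simp),
    ShortComplex.moduleCat_exact_iff]
  rfl

theorem extM_zero_iff (X : ModuleCat.{u} R) (P : ProjectiveResolution X)
    (Y : ModuleCat.{u} R) :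
    Subsingleton (((Ext R (ModuleCat.{u} R) 0).obj (Opposite.op X)).obj Y) ↔
    ∀ f : P.complex.X 0 ⟶ Y, P.complex.d 1 0 ≫ f = 0 → f = 0 := by
  rw [← ModuleCat.isZero_iff_subsingleton, (P.isoExt (R := R) 0 Y).isZero_iff,
    ← HomologicalComplex.exactAt_iff_isZero_homology,
    HomologicalComplex.exactAt_iff' _ 0 0 1 CochainComplex.prev_nat_zero (by simp),
    ShortComplex.moduleCat_exact_iff]
  constructor
  · intro h f hf
    obtain ⟨g, hg⟩ := h f hf
    rw [← hg]
    have : ((P.complex.linearYonedaObj R Y).sc' 0 0 1).f = 0 :=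
      (P.complex.linearYonedaObj R Y).shape 0 0 (Nat.succ_ne_zero 0)
    rw [this]
    rfl
  · intro h f hf
    refine ⟨0, ?_⟩
    rw [map_zero]
    exact (h f hf).symm

theorem ext_succ_iff (i : ℕ) (X : ModuleCat.{u} R) (P : ProjectiveResolution X)
    (Y : ModuleCat.{u} R) :
    Subsingleton (Abelian.Ext X Y (i+1)) ↔
    ∀ f : P.complex.X (i+1) ⟶ Y, P.complex.d (i+2) (i+1) ≫ f = 0 →
      ∃ g : P.complex.X i ⟶ Y, P.complex.d (i+1) i ≫ g = f := by
  constructor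
  · intro h f hf
    exact (P.extMk_eq_zero_iff f (i+2) rfl hf i rfl).1 (Subsingleton.elim _ _)
  · intro h
    refine subsingleton_of_forall_eq 0 fun x => ?_
    obtain ⟨f, hf, rfl⟩ := P.extMk_surjective x (i+2) rfl
    exact (P.extMk_eq_zero_iff f (i+2) rfl hf i rfl).2 (h f hf)

theorem ext_zero_iff (X : ModuleCat.{u} R) (P : ProjectiveResolution X)
    (Y : ModuleCat.{u} R) :
    Subsingleton (Abelian.Ext X Y 0) ↔
    ∀ f : P.complex.X 0 ⟶ Y, P.complex.d 1 0 ≫ f = 0 → f = 0 := by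
  rw [Abelian.Ext.homEquiv₀.subsingleton_congr]
  constructor
  · intro h f hf
    have := P.exact₀
    have he : Epi (P.π.f 0) := inferInstance
    obtain ⟨g, hg⟩ : ∃ g, P.π.f 0 ≫ g = f := ⟨_, this.g_desc f hf⟩
    have hg0 : g = 0 := Subsingleton.elim (α := (X ⟶ Y)) g 0
    rw [← hg, hg0]
    exact Limits.comp_zero
  · intro h
    have key : ∀ x : ((ChainComplex.single₀ (ModuleCat R)).obj X).X 0 ⟶ Y, x = 0 := by
      intro x
      have he : Epi (P.π.f 0) := inferInstance
      have h1 := h (P.π.f 0 ≫ x) (by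
        rw [← Category.assoc, P.complex_d_comp_π_f_zero]; exact Limits.zero_comp)
      rw [← cancel_epi (P.π.f 0)]
      exact h1.trans Limits.comp_zero.symm
    exact subsingleton_of_forall_eq 0 fun x => key x

theorem extM_iff (i : ℕ) (M N : Type u) [AddCommGroup M] [Module R M]
    [AddCommGroup N] [Module R N] : Subsingleton (extM R i M N) ↔ Ev R i M N := by
  cases i with
  | zero => exact (extM_zero_iff _ (projectiveResolution _) _).trans (ext_zero_iff _ _ _).symm
  | succ i => exact (extM_succ_iff _ _ (projectiveResolution _) _).trans (ext_succ_iff _ _ _ _).symm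

end Part1

section Part2

open Abelian

variable {R : Type u} [CommRing R]
variable {A B C N X Y : Type u} [AddCommGroup A] [Module R A] [AddCommGroup B] [Module R B]
  [AddCommGroup C] [Module R C] [AddCommGroup N] [Module R N] [AddCommGroup X] [Module R X]
  [AddCommGroup Y] [Module R Y]

theorem ses_shortExact {f : A →ₗ[R] B} {g : B →ₗ[R] C} (hf : Function.Injective f)
    (hfg : Function.Exact f g) (hg : Function.Surjective g) :
    (ShortComplex.mk (ModuleCat.ofHom f) (ModuleCat.ofHom g)
      (by ext x; exact hfg.apply_apply_eq_zero x)).ShortExact where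
  exact := by
    rw [ShortComplex.moduleCat_exact_iff]
    intro x hx
    exact (hfg x).1 hx
  mono_f := by rw [ModuleCat.mono_iff_injective]; exact hf
  epi_g := by rw [ModuleCat.epi_iff_surjective]; exact hg

theorem Ev.con1 {f : A →ₗ[R] B} {g : B →ₗ[R] C} (hf : Function.Injective f)
    (hfg : Function.Exact f g) (hg : Function.Surjective g) {i : ℕ}
    (h1 : Ev R i A N) (h2 : Ev R (i+1) B N) : Ev R (i+1) C N := by
  refine subsingleton_of_forall_eq 0 fun x => ?_
  obtain ⟨y, rfl⟩ := Ext.contravariant_sequence_exact₃ (ses_shortExact hf hfg hg) _ x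
    (Subsingleton.elim (h := h2) _ _) (n₀ := i) (add_comm _ _)
  rw [Subsingleton.elim (h := h1) y 0, Ext.comp_zero]

theorem Ev.con2 {f : A →ₗ[R] B} {g : B →ₗ[R] C} (hf : Function.Injective f)
    (hfg : Function.Exact f g) (hg : Function.Surjective g) {i : ℕ}
    (h1 : Ev R i B N) (h2 : Ev R (i+1) C N) : Ev R i A N := by
  refine subsingleton_of_forall_eq 0 fun x => ?_
  obtain ⟨y, rfl⟩ := Ext.contravariant_sequence_exact₁ (ses_shortExact hf hfg hg) _ x
    (n₁ := i+1) (add_comm _ _) (Subsingleton.elim (h := h2) _ _)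
  rw [Subsingleton.elim (h := h1) y 0, Ext.comp_zero]

theorem Ev.con3 {f : A →ₗ[R] B} {g : B →ₗ[R] C} (hf : Function.Injective f)
    (hfg : Function.Exact f g) (hg : Function.Surjective g)
    (h1 : ∀ φ : A →ₗ[R] N, ∃ ψ : B →ₗ[R] N, ψ ∘ₗ f = φ)
    (h2 : Ev R 1 B N) : Ev R 1 C N := by
  refine subsingleton_of_forall_eq 0 fun x => ?_
  obtain ⟨y, rfl⟩ := Ext.contravariant_sequence_exact₃ (ses_shortExact hf hfg hg) _ x
    (Subsingleton.elim (h := h2) _ _) (n₀ := 0) (add_comm _ _)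
  obtain ⟨φ, rfl⟩ := Ext.homEquiv₀.symm.surjective y
  obtain ⟨ψ, hψ⟩ := h1 φ.hom
  have : φ = ModuleCat.ofHom f ≫ ModuleCat.ofHom ψ := by
    ext a; exact (LinearMap.congr_fun hψ a).symm
  subst this
  change Ext.comp _ (Ext.mk₀ _) _ = _
  rw [← Ext.mk₀_comp_mk₀]
  exact ShortComplex.ShortExact.extClass_comp_assoc (ses_shortExact hf hfg hg) _

theorem Ev.con4 {f : A →ₗ[R] B} {g : B →ₗ[R] C} (hf : Function.Injective f)
    (hfg : Function.Exact f g) (hg : Function.Surjective g)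
    (h : Ev R 1 C N) (φ : A →ₗ[R] N) : ∃ ψ : B →ₗ[R] N, ψ ∘ₗ f = φ := by
  obtain ⟨y, hy⟩ := Ext.contravariant_sequence_exact₁ (ses_shortExact hf hfg hg) _
    (Ext.mk₀ (ModuleCat.ofHom φ))
    (n₁ := 1) rfl (Subsingleton.elim (h := h) _ _)
  obtain ⟨ψ, rfl⟩ := Ext.homEquiv₀.symm.surjective y
  change Ext.comp (Ext.mk₀ _) (Ext.mk₀ _) _ = _ at hy
  rw [Ext.mk₀_comp_mk₀] at hy
  have := Ext.homEquiv₀.symm.injective hy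
  refine ⟨ψ.hom, ?_⟩
  ext a
  exact congrArg (fun t => t.hom a) this

theorem Ev.cov1 {f : A →ₗ[R] B} {g : B →ₗ[R] C} (hf : Function.Injective f)
    (hfg : Function.Exact f g) (hg : Function.Surjective g) {i : ℕ}
    (h1 : Ev R i X B) (h2 : ∀ j, j + 1 = i → Ev R j X C) : Ev R i X A := by
  refine subsingleton_of_forall_eq 0 fun x => ?_
  cases i with
  | zero =>
    have : Mono (ModuleCat.ofHom f) := by rw [ModuleCat.mono_iff_injective]; exact hf
    exact Ext.postcomp_mk₀_injective_of_mono (ModuleCat.of R X) (ModuleCat.ofHom f)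
      (Subsingleton.elim (h := h1) _ _)
  | succ i =>
    obtain ⟨y, rfl⟩ := Ext.covariant_sequence_exact₁ _ (ses_shortExact hf hfg hg) x
      (Subsingleton.elim (h := h1) _ _) (n₀ := i) rfl
    rw [Subsingleton.elim (h := h2 i rfl) y 0, Ext.zero_comp]

theorem Ev.cov2 {f : A →ₗ[R] B} {g : B →ₗ[R] C} (hf : Function.Injective f)
    (hfg : Function.Exact f g) (hg : Function.Surjective g) {i : ℕ}
    (h1 : Ev R i X B) (h2 : Ev R (i+1) X A) : Ev R i X C := by
  refine subsingleton_of_forall_eq 0 fun x => ?_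
  obtain ⟨y, rfl⟩ := Ext.covariant_sequence_exact₃ _ (ses_shortExact hf hfg hg) x
    (n₁ := i+1) rfl (Subsingleton.elim (h := h2) _ _)
  rw [Subsingleton.elim (h := h1) y 0, Ext.zero_comp]

/-- pushforward on Ext -/
noncomputable def pf (X : Type u) [AddCommGroup X] [Module R X] (i : ℕ) (f : A →ₗ[R] B) :
    Abelian.Ext (ModuleCat.of R X) (ModuleCat.of R A) i →ₗ[R]
      Abelian.Ext (ModuleCat.of R X) (ModuleCat.of R B) i where
  toFun x := x.comp (Ext.mk₀ (ModuleCat.ofHom f)) (add_zero i)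
  map_add' x y := by rw [Ext.add_comp]
  map_smul' r x := by rw [Ext.smul_comp]; rfl

theorem pf_comp (i : ℕ) (f : A →ₗ[R] B) (g : B →ₗ[R] C) (x) :
    pf X i (g ∘ₗ f) x = pf X i g (pf X i f x) := by
  simp [pf]

theorem pf_id (i : ℕ) (x) : pf X i (LinearMap.id : A →ₗ[R] A) x = x := by
  simp [pf]

theorem pf_add (i : ℕ) (f g : A →ₗ[R] B) (x) :
    pf X i (f + g) x = pf X i f x + pf X i g x := by
  simp [pf, ModuleCat.ofHom_add, Ext.mk₀_add, Ext.comp_add]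

theorem pf_smul (i : ℕ) (r : R) (f : A →ₗ[R] B) (x) :
    pf X i (r • f) x = r • pf X i f x := by
  have : ModuleCat.ofHom (r • f) = r • ModuleCat.ofHom f := rfl
  simp [pf, this, Ext.mk₀_smul]

/-- pushforward, linear in the map -/
noncomputable def pfL {i : ℕ} (x : Abelian.Ext (ModuleCat.of R X) (ModuleCat.of R A) i) :
    (A →ₗ[R] B) →ₗ[R] Abelian.Ext (ModuleCat.of R X) (ModuleCat.of R B) i where
  toFun f := pf X i f x
  map_add' f g := pf_add i f g x
  map_smul' r f := pf_smul i r f x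

theorem pf_inj {f : A →ₗ[R] B} {g : B →ₗ[R] C} (hf : Function.Injective f)
    (hfg : Function.Exact f g) (hg : Function.Surjective g) {i : ℕ}
    (h2 : ∀ j, j + 1 = i → Ev R j X C) (x) (hx : pf X i f x = 0) : x = 0 := by
  cases i with
  | zero =>
    have : Mono (ModuleCat.ofHom f) := by rw [ModuleCat.mono_iff_injective]; exact hf
    exact Ext.postcomp_mk₀_injective_of_mono (ModuleCat.of R X) (ModuleCat.ofHom f)
      (hx.trans (map_zero (pf X 0 f)).symm)
  | succ i =>
    obtain ⟨y, rfl⟩ := Ext.covariant_sequence_exact₁ _ (ses_shortExact hf hfg hg) x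
      hx (n₀ := i) rfl
    rw [Subsingleton.elim (h := h2 i rfl) y 0, Ext.zero_comp]

theorem pf_exact {f : A →ₗ[R] B} {g : B →ₗ[R] C} (hf : Function.Injective f)
    (hfg : Function.Exact f g) (hg : Function.Surjective g) {i : ℕ}
    (x) (hx : pf X i g x = 0) : ∃ y, pf X i f y = x :=
  Ext.covariant_sequence_exact₂ _ (ses_shortExact hf hfg hg) x hx

theorem Ev.of_proj [Module.Projective R A] (i : ℕ) : Ev R (i+1) A N := by
  have : Projective (ModuleCat.of R A) := (IsProjective.iff_projective A).1 inferInstance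
  exact Ext.subsingleton_of_projective _ _ _

theorem Ev.congr_left (e : A ≃ₗ[R] B) {i : ℕ} (h : Ev R i A N) : Ev R i B N := by
  refine subsingleton_of_forall_eq 0 fun x => ?_
  have h1 : (Ext.mk₀ e.toModuleIso.hom).comp x (zero_add i) = 0 := Subsingleton.elim (h := h) _ _
  have h2 : (Ext.mk₀ e.toModuleIso.inv).comp ((Ext.mk₀ e.toModuleIso.hom).comp x (zero_add i))
    (zero_add i) = x := by
    rw [Ext.mk₀_comp_mk₀_assoc, Iso.inv_hom_id, Ext.mk₀_id_comp]
  rw [← h2, h1, Ext.comp_zero]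

theorem Ev.congr_right (e : A ≃ₗ[R] B) {i : ℕ} (h : Ev R i X A) : Ev R i X B := by
  refine subsingleton_of_forall_eq 0 fun x => ?_
  have : pf X i e.symm.toLinearMap x = 0 := Subsingleton.elim (h := h) _ _
  rw [← pf_id i x, ← e.comp_symm, pf_comp, this, map_zero]

theorem Ev.zero_iff : Ev R 0 X A ↔ ∀ f : X →ₗ[R] A, f = 0 := by
  rw [Ev, Ext.homEquiv₀.subsingleton_congr]
  constructor
  · intro h f
    have : ModuleCat.ofHom f = 0 := Subsingleton.elim _ _
    exact congrArg ModuleCat.Hom.hom this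
  · intro h
    refine subsingleton_of_forall_eq 0 fun x => ?_
    ext a
    exact LinearMap.congr_fun (h x.hom) a

theorem Ev.pi {i : ℕ} (q : ℕ) (h : Ev R i X A) : Ev R i X (Fin q → A) := by
  refine subsingleton_of_forall_eq 0 fun x => ?_
  have h1 : (LinearMap.id : (Fin q → A) →ₗ[R] _) =
    ∑ j, LinearMap.single R (fun _ => A) j ∘ₗ LinearMap.proj j := by
    ext j a l
    simp [Pi.single_apply]
  have h2 : pfL x (LinearMap.id : (Fin q → A) →ₗ[R] _) = x := pf_id i x
  rw [← h2, h1, map_sum]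
  refine Finset.sum_eq_zero fun j _ => ?_
  change pf X i _ x = 0
  rw [pf_comp, Subsingleton.elim (h := h) (pf X i (LinearMap.proj j) x) 0, map_zero]

theorem ext_killed {I : Ideal R} {i : ℕ} (x : Abelian.Ext (ModuleCat.of R (R ⧸ I)) (ModuleCat.of R A) i)
    {a : R} (ha : a ∈ I) : a • x = 0 := by
  have : a • 𝟙 (ModuleCat.of R (R ⧸ I)) = 0 := by
    refine ModuleCat.hom_ext (LinearMap.ext fun y => ?_)
    obtain ⟨y, rfl⟩ := Ideal.Quotient.mk_surjective y
    change a • (Submodule.Quotient.mk y : R ⧸ I) = 0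
    rw [← Submodule.Quotient.mk_smul, Submodule.Quotient.mk_eq_zero]
    exact I.mul_mem_right _ ha
  have h2 : a • x = (Ext.mk₀ (a • 𝟙 (ModuleCat.of R (R ⧸ I)))).comp x (zero_add i) := by
    simp [Ext.mk₀_smul]
  rw [h2, this]; simp

end Part2

section Part3

variable {R : Type u} [CommRing R]

theorem isGDimZero_iff (M : Type u) [AddCommGroup M] [Module R M] : IsGDimZero R M ↔
    Module.Finite R M ∧ Function.Bijective (Module.Dual.eval R M) ∧
    (∀ i : ℕ, Ev R (i+1) M R) ∧ (∀ i : ℕ, Ev R (i+1) (Module.Dual R M) R) := by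
  unfold IsGDimZero
  refine and_congr Iff.rfl (and_congr Iff.rfl (and_congr ?_ ?_))
  · constructor
    · intro h i; exact (extM_iff _ _ _).1 (h (i+1) (Nat.succ_pos i))
    · intro h i hi
      obtain ⟨j, rfl⟩ := Nat.exists_eq_add_of_lt hi
      rw [zero_add]
      exact (extM_iff _ _ _).2 (h j)
  · constructor
    · intro h i; exact (extM_iff _ _ _).1 (h (i+1) (Nat.succ_pos i))
    · intro h i hi
      obtain ⟨j, rfl⟩ := Nat.exists_eq_add_of_lt hi
      rw [zero_add]
      exact (extM_iff _ _ _).2 (h j)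

theorem isGDimZero_of_proj (M : Type u) [AddCommGroup M] [Module R M] [Module.Finite R M]
    [Module.Projective R M] : IsGDimZero R M := by
  rw [isGDimZero_iff]
  exact ⟨inferInstance, Module.bijective_dual_eval R M, fun i => Ev.of_proj i,
    fun i => Ev.of_proj i⟩

variable {L G M : Type u} [AddCommGroup L] [Module R L] [AddCommGroup G] [Module R G]
  [AddCommGroup M] [Module R M]

theorem dual_exact {f : L →ₗ[R] G} {g : G →ₗ[R] M}
    (hfg : Function.Exact f g) (hg : Function.Surjective g) :
    Function.Exact g.dualMap f.dualMap := by
  intro φ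
  constructor
  · intro h
    have h1 : ∀ y, g y = 0 → φ y = 0 := by
      intro y hy
      obtain ⟨x, rfl⟩ := (hfg y).1 hy
      exact LinearMap.congr_fun h x
    have h2 : LinearMap.ker g ≤ LinearMap.ker φ := fun y hy => h1 y hy
    let e := g.quotKerEquivOfSurjective hg
    refine ⟨(LinearMap.ker g).liftQ φ h2 ∘ₗ e.symm.toLinearMap, ?_⟩
    ext y
    have : e.symm (g y) = Submodule.Quotient.mk y := by
      rw [LinearEquiv.symm_apply_eq]; rfl
    simp [LinearMap.dualMap_apply, this]
  · rintro ⟨ψ, rfl⟩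
    ext x
    simp [LinearMap.dualMap_apply, hfg.apply_apply_eq_zero]

theorem dual_inj {g : G →ₗ[R] M} (hg : Function.Surjective g) :
    Function.Injective g.dualMap := LinearMap.dualMap_injective_of_surjective hg

theorem isGDimZero_coker {f : L →ₗ[R] G} {g : G →ₗ[R] M} (hf : Function.Injective f)
    (hfg : Function.Exact f g) (hg : Function.Surjective g)
    (hL : IsGDimZero R L) (hG : IsGDimZero R G) (hs : Function.Surjective f.dualMap) :
    IsGDimZero R M := by
  rw [isGDimZero_iff] at *
  obtain ⟨fL, bL, eL, dL⟩ := hL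
  obtain ⟨fG, bG, eG, dG⟩ := hG
  have dex := dual_exact hfg hg
  have dinj := dual_inj hg
  refine ⟨Module.Finite.of_surjective g hg, ?_, ?_, ?_⟩
  · have ddex := dual_exact dex hs
    have ddsurj : Function.Surjective g.dualMap.dualMap := by
      intro φ
      obtain ⟨ψ, hψ⟩ := Ev.con4 dinj dex hs (dL 0) φ
      exact ⟨ψ, hψ⟩
    constructor
    · rw [injective_iff_map_eq_zero]
      intro m hm
      obtain ⟨y, rfl⟩ := hg m
      have h1 : g.dualMap.dualMap (Module.Dual.eval R G y) = 0 := hm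
      obtain ⟨l', hl'⟩ := (ddex _).1 h1
      obtain ⟨l, rfl⟩ := bL.2 l'
      have h2 : Module.Dual.eval R G (f l) = Module.Dual.eval R G y := hl'
      rw [← bG.1 h2, hfg.apply_apply_eq_zero]
    · intro φ
      obtain ⟨ψ, rfl⟩ := ddsurj φ
      obtain ⟨y, rfl⟩ := bG.2 ψ
      exact ⟨g y, rfl⟩
  · intro i
    cases i with
    | zero => exact Ev.con3 hf hfg hg hs (eG 0)
    | succ i => exact Ev.con1 hf hfg hg (eL i) (eG (i+1))
  · intro i
    exact Ev.con2 dinj dex hs (dG i) (dL (i+1))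

theorem IsGDimZero.congr (e : L ≃ₗ[R] M) (h : IsGDimZero R L) : IsGDimZero R M := by
  rw [isGDimZero_iff] at *
  obtain ⟨fL, bL, eL, dL⟩ := h
  refine ⟨Module.Finite.equiv e, ?_, fun i => (eL i).congr_left e,
    fun i => (dL i).congr_left e.symm.dualMap⟩
  have : (Module.Dual.eval R M : M → _) =
    e.symm.dualMap.symm.dualMap ∘ Module.Dual.eval R L ∘ e.symm := by
    ext m φ
    simp [Module.Dual.eval_apply, LinearEquiv.dualMap_apply]
  rw [this]
  exact (LinearEquiv.bijective _).comp (bL.comp e.symm.bijective)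

theorem GDimLE.congr {n : ℕ} (e : L ≃ₗ[R] M) (h : GDimLE R n (ModuleCat.of R L)) :
    GDimLE R n (ModuleCat.of R M) := by
  cases n with
  | zero => exact IsGDimZero.congr e h
  | succ n =>
    obtain ⟨G, f, hG, hs, hk⟩ := h
    refine ⟨G, e.toLinearMap ∘ₗ f, hG, e.surjective.comp hs, ?_⟩
    have : LinearMap.ker (e.toLinearMap ∘ₗ f) = LinearMap.ker f := LinearEquiv.ker_comp _ _
    rw [this]
    exact hk

theorem GDimLE.of_exact {n : ℕ} {f : L →ₗ[R] G} {g : G →ₗ[R] M} (hf : Function.Injective f)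
    (hfg : Function.Exact f g) (hg : Function.Surjective g) (hG : IsGDimZero R G)
    (hL : GDimLE R n (ModuleCat.of R L)) : GDimLE R (n+1) (ModuleCat.of R M) := by
  refine ⟨ModuleCat.of R G, g, hG, hg, ?_⟩
  refine GDimLE.congr (LinearEquiv.ofInjective f hf ≪≫ₗ LinearEquiv.ofEq _ _ ?_) hL
  exact hfg.linearMap_ker_eq.symm

theorem GDimLE.exists_exact {n : ℕ} (h : GDimLE R (n+1) (ModuleCat.of R M)) :
    ∃ (L G : ModuleCat.{u} R) (f : L →ₗ[R] G) (g : G →ₗ[R] M), Function.Injective f ∧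
      Function.Exact f g ∧ Function.Surjective g ∧ IsGDimZero R G ∧ GDimLE R n (ModuleCat.of R L) := by
  obtain ⟨G, g, hG, hs, hk⟩ := h
  exact ⟨ModuleCat.of R (LinearMap.ker g), G, (LinearMap.ker g).subtype, g,
    Subtype.val_injective, LinearMap.exact_subtype_ker_map g, hs, hG, hk⟩

theorem GDimLE.ev {n : ℕ} : ∀ {M : Type u} [AddCommGroup M] [Module R M],
    GDimLE R n (ModuleCat.of R M) → ∀ i, Ev R (n+i+1) M R := by
  induction n with
  | zero => intro M _ _ h i; rw [zero_add]; exact ((isGDimZero_iff M).1 h).2.2.1 i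
  | succ n ih =>
    intro M _ _ h i
    obtain ⟨L, G, f, g, hf, hfg, hg, hG, hL⟩ := h.exists_exact
    rw [Nat.add_right_comm n 1 i]
    exact Ev.con1 hf hfg hg (ih hL i) (((isGDimZero_iff G).1 hG).2.2.1 _)

theorem GDimLE.zero_of_ev {n : ℕ} : ∀ {M : Type u} [AddCommGroup M] [Module R M],
    GDimLE R n (ModuleCat.of R M) → (∀ i, Ev R (i+1) M R) → IsGDimZero R M := by
  induction n with
  | zero => intro M _ _ h _; exact h
  | succ n ih =>
    intro M _ _ h hev
    obtain ⟨L, G, f, g, hf, hfg, hg, hG, hL⟩ := h.exists_exact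
    have hL0 : IsGDimZero R L := ih hL fun i =>
      Ev.con2 hf hfg hg (((isGDimZero_iff G).1 hG).2.2.1 _) (hev (i+1))
    exact isGDimZero_coker hf hfg hg hL0 hG fun φ => Ev.con4 hf hfg hg (hev 0) φ

/-- embedding of totally reflexive modules -/
theorem IsGDimZero.embed [IsNoetherianRing R] (h : IsGDimZero R G) :
    ∃ (q : ℕ) (ι : G →ₗ[R] (Fin q → R)), Function.Injective ι ∧
      Submodule.span R (Set.range fun j => (LinearMap.proj j ∘ₗ ι : Module.Dual R G)) = ⊤ ∧
      IsGDimZero R ((Fin q → R) ⧸ LinearMap.range ι) := by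
  have h' := (isGDimZero_iff G).1 h
  obtain ⟨fG, bG, eG, dG⟩ := h'
  have : Module.Finite R (Module.Dual R G) := inferInstance
  obtain ⟨q, s, hs⟩ := Submodule.fg_iff_exists_fin_generating_family.1 (this.fg_top)
  let ι : G →ₗ[R] (Fin q → R) := LinearMap.pi s
  have hspan : Submodule.span R (Set.range fun j => (LinearMap.proj j ∘ₗ ι : Module.Dual R G)) = ⊤ :=
    hs
  have hinj : Function.Injective ι := by
    rw [injective_iff_map_eq_zero]
    intro x hx
    apply bG.1
    rw [map_zero]
    have hle : Submodule.span R (Set.range s) ≤ LinearMap.ker (Module.Dual.eval R G x) := by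
      rw [Submodule.span_le]
      rintro _ ⟨j, rfl⟩
      exact congrFun hx j
    ext φ
    rw [hs] at hle
    exact hle (Submodule.mem_top (x := φ))
  refine ⟨q, ι, hinj, hspan, ?_⟩
  refine isGDimZero_coker hinj (LinearMap.exact_map_mkQ_range ι) (Submodule.mkQ_surjective _) h
    (isGDimZero_of_proj _) ?_
  rw [← LinearMap.range_eq_top, eq_top_iff, ← hs, Submodule.span_le]
  rintro _ ⟨j, rfl⟩
  exact ⟨LinearMap.proj j, rfl⟩

end Part3

section Part4

variable {R : Type u} [CommRing R] [IsNoetherianRing R]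

theorem IsGDimZero.depth {K : Type u} [AddCommGroup K] [Module R K] {d : ℕ}
    (hd0 : ∀ t < d, Ev R t K R) : ∀ (t : ℕ), t < d → ∀ {G : Type u} [AddCommGroup G] [Module R G],
    IsGDimZero R G → Ev R t K G := by
  intro t
  induction t with
  | zero =>
    intro ht G _ _ hG
    obtain ⟨q, ι, hinj, hspan, hc⟩ := hG.embed
    exact Ev.cov1 hinj (LinearMap.exact_map_mkQ_range ι) (Submodule.mkQ_surjective _)
      (Ev.pi q (hd0 0 ht)) (by intro j hj; omega)
  | succ t ih =>
    intro ht G _ _ hG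
    obtain ⟨q, ι, hinj, hspan, hc⟩ := hG.embed
    refine Ev.cov1 hinj (LinearMap.exact_map_mkQ_range ι) (Submodule.mkQ_surjective _)
      (Ev.pi q (hd0 _ ht)) ?_
    intro j hj
    obtain rfl : j = t := by omega
    exact ih (by omega) hc

theorem pi_ext_zero {K : Type u} [AddCommGroup K] [Module R K] {d q : ℕ}
    (x : Abelian.Ext (ModuleCat.of R K) (ModuleCat.of R (Fin q → R)) d)
    (hx : ∀ j, pf K d (LinearMap.proj j : (Fin q → R) →ₗ[R] R) x = 0) : x = 0 := by
  have h1 : (LinearMap.id : (Fin q → R) →ₗ[R] _) =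
    ∑ j, LinearMap.single R (fun _ => R) j ∘ₗ LinearMap.proj j := by
    ext j a
    simp [Pi.single_apply]
  have h2 : pfL x (LinearMap.id : (Fin q → R) →ₗ[R] _) = x := pf_id d x
  rw [← h2, h1, map_sum]
  refine Finset.sum_eq_zero fun j _ => ?_
  change pf K d _ x = 0
  rw [pf_comp, hx, map_zero]

theorem exists_theta [IsLocalRing R] {W V : Type u} [AddCommGroup W] [Module R W]
    [AddCommGroup V] [Module R V] [Module.Finite R W] (N : Submodule R W) (hN : N ≠ ⊤)
    (hV : ∀ a ∈ IsLocalRing.maximalIdeal R, ∀ v : V, a • v = 0) (v : V) (hv : v ≠ 0) :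
    ∃ θ : W →ₗ[R] V, θ ≠ 0 ∧ ∀ x ∈ N, θ x = 0 := by
  obtain ⟨N', hN', hle⟩ := (eq_top_or_exists_le_coatom N).resolve_left hN
  have hsimp : IsSimpleModule R (W ⧸ N') := isSimpleModule_iff_isCoatom.2 hN'
  obtain ⟨I, hI, ⟨e⟩⟩ := isSimpleModule_iff_quot_maximal.1 hsimp
  have hIm : I = IsLocalRing.maximalIdeal R := IsLocalRing.eq_maximalIdeal hI
  have hk : I ≤ LinearMap.ker (LinearMap.toSpanSingleton R V v) := by
    intro a ha
    exact hV a (hIm ▸ ha) v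
  refine ⟨Submodule.liftQ I (LinearMap.toSpanSingleton R V v) hk ∘ₗ e.toLinearMap ∘ₗ N'.mkQ, ?_, ?_⟩
  · intro h0
    obtain ⟨w, hw⟩ := Submodule.mkQ_surjective N' (e.symm (Submodule.Quotient.mk 1))
    have h1 := LinearMap.congr_fun h0 w
    simp only [LinearMap.comp_apply, hw] at h1
    rw [LinearEquiv.coe_coe, LinearEquiv.apply_symm_apply] at h1
    have h2 : (1:R) • v = 0 := h1
    exact hv (by rwa [one_smul] at h2)
  · intro x hx
    have : N'.mkQ x = 0 := by simpa using hle hx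
    simp only [LinearMap.comp_apply, this, map_zero]

theorem dual_surj_local [IsLocalRing R] {d : ℕ}
    (hd0 : ∀ t < d, Ev R t (R ⧸ IsLocalRing.maximalIdeal R) R)
    (hd : ¬ Ev R d (R ⧸ IsLocalRing.maximalIdeal R) R)
    {Y X L : Type u} [AddCommGroup Y] [Module R Y] [AddCommGroup X] [Module R X]
    [AddCommGroup L] [Module R L] {f : Y →ₗ[R] X} {g : X →ₗ[R] L} (hf : Function.Injective f)
    (hfg : Function.Exact f g) (hg : Function.Surjective g)
    (hY : IsGDimZero R Y) (hX : IsGDimZero R X)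
    (hL : ∀ t < d, Ev R t (R ⧸ IsLocalRing.maximalIdeal R) L) :
    Function.Surjective f.dualMap := by
  by_contra hns
  have hN : LinearMap.range f.dualMap ≠ ⊤ := by rwa [Ne, LinearMap.range_eq_top]
  obtain ⟨v, hv⟩ : ∃ v : Abelian.Ext (ModuleCat.of R (R ⧸ IsLocalRing.maximalIdeal R))
      (ModuleCat.of R R) d, v ≠ 0 := by
    by_contra! h
    exact hd (subsingleton_of_forall_eq 0 h)
  have fY : Module.Finite R Y := hY.1
  obtain ⟨θ, hθ0, hθ⟩ := exists_theta (LinearMap.range f.dualMap) hN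
    (fun a ha v => ext_killed v ha) v hv
  apply hθ0
  obtain ⟨q, ι, hinj, hspan, hc⟩ := hY.embed
  obtain ⟨s, ι', hinj', hspan', hc'⟩ := hc.embed
  obtain ⟨r, ξ, hinjξ, hspanξ, hcξ⟩ := hX.embed
  set k := (R ⧸ IsLocalRing.maximalIdeal R) with hk
  let co : Fin q → Module.Dual R Y := fun j => LinearMap.proj j ∘ₗ ι
  let w : Abelian.Ext (ModuleCat.of R k) (ModuleCat.of R (Fin q → R)) d :=
    ∑ j, pf k d (LinearMap.single R (fun _ => R) j) (θ (co j))
  have hw : ∀ ψ : (Fin q → R) →ₗ[R] R, pf k d ψ w = θ (ψ ∘ₗ ι) := by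
    intro ψ
    have e1 : ψ ∘ₗ ι = ∑ j, ψ (Pi.single j 1) • co j := by
      ext y
      have : ι y = ∑ j, (ι y j) • (Pi.single j 1 : Fin q → R) := by
        ext l; simp [Pi.single_apply]
      rw [LinearMap.comp_apply]
      conv_lhs => rw [this]
      simp [co, mul_comm]
    have e2 : ∀ j, ψ ∘ₗ LinearMap.single R (fun _ => R) j =
        ψ (Pi.single j 1) • (LinearMap.id : R →ₗ[R] R) := by
      intro j
      ext
      simp
    rw [e1, map_sum, map_sum]
    refine Finset.sum_congr rfl fun j _ => ?_
    rw [← pf_comp, e2, pf_smul, pf_id, map_smul]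
  have hw0 : pf k d (LinearMap.range ι).mkQ w = 0 := by
    refine pf_inj hinj' (LinearMap.exact_map_mkQ_range ι') (Submodule.mkQ_surjective _)
      (fun j hj => hc'.depth hd0 j (by omega)) _ ?_
    refine pi_ext_zero _ fun l => ?_
    rw [← pf_comp, ← pf_comp, hw]
    have : ((LinearMap.proj l ∘ₗ ι') ∘ₗ (LinearMap.range ι).mkQ) ∘ₗ ι = 0 := by
      ext y
      have : (LinearMap.range ι).mkQ (ι y) = 0 := by simp
      simp only [LinearMap.comp_apply, this, map_zero, LinearMap.zero_apply]
    rw [this, map_zero]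
  obtain ⟨c, hcw⟩ := pf_exact hinj (LinearMap.exact_map_mkQ_range ι)
    (Submodule.mkQ_surjective _) w hw0
  have hcθ : ∀ ψ : Module.Dual R Y, pf k d ψ c = θ ψ := by
    have : pfL c = θ := by
      refine LinearMap.ext_on_range hspan fun j => ?_
      change pf k d _ c = _
      rw [pf_comp, hcw, hw]
    intro ψ
    exact LinearMap.congr_fun this ψ
  have hfc : pf k d f c = 0 := by
    refine pf_inj hinjξ (LinearMap.exact_map_mkQ_range ξ) (Submodule.mkQ_surjective _)
      (fun j hj => hcξ.depth hd0 j (by omega)) _ ?_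
    refine pi_ext_zero _ fun l => ?_
    rw [← pf_comp, ← pf_comp, hcθ]
    exact hθ _ ⟨LinearMap.proj l ∘ₗ ξ, rfl⟩
  have hc0 : c = 0 := pf_inj hf hfg hg (fun j hj => hL j (by omega)) _ hfc
  ext1 ψ
  rw [← hcθ, hc0, map_zero, LinearMap.zero_apply]

theorem tr_of_depth [IsLocalRing R] {d : ℕ}
    (hd0 : ∀ t < d, Ev R t (R ⧸ IsLocalRing.maximalIdeal R) R)
    (hd : ¬ Ev R d (R ⧸ IsLocalRing.maximalIdeal R) R) (s : ℕ) :
    ∀ {L : Type u} [AddCommGroup L] [Module R L], GDimLE R s (ModuleCat.of R L) →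
    (∀ t < d, Ev R t (R ⧸ IsLocalRing.maximalIdeal R) L) → IsGDimZero R L := by
  induction s with
  | zero => intro L _ _ h _; exact h
  | succ s ih =>
    intro M _ _ h hM
    obtain ⟨L, G, f, g, hf, hfg, hg, hG, hL⟩ := h.exists_exact
    have hL0 : IsGDimZero R L := ih hL fun t ht =>
      Ev.cov1 hf hfg hg (hG.depth hd0 t ht) (fun j hj => hM j (by omega))
    exact isGDimZero_coker hf hfg hg hL0 hG (dual_surj_local hd0 hd hf hfg hg hL0 hG hM)

theorem ev_of_depth [IsLocalRing R] {d : ℕ}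
    (hd0 : ∀ t < d, Ev R t (R ⧸ IsLocalRing.maximalIdeal R) R)
    (hd : ¬ Ev R d (R ⧸ IsLocalRing.maximalIdeal R) R) (s : ℕ) :
    ∀ (e : ℕ) {L : Type u} [AddCommGroup L] [Module R L], GDimLE R s (ModuleCat.of R L) →
    (∀ t, t + e < d → Ev R t (R ⧸ IsLocalRing.maximalIdeal R) L) → ∀ i, Ev R (e + i + 1) L R := by
  induction s with
  | zero => intro e L _ _ h _ i; exact ((isGDimZero_iff L).1 h).2.2.1 _
  | succ s ih =>
    intro e M _ _ h hM i
    cases e with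
    | zero => exact ((isGDimZero_iff M).1 (tr_of_depth hd0 hd _ h hM)).2.2.1 _
    | succ e =>
      obtain ⟨L, G, f, g, hf, hfg, hg, hG, hL⟩ := h.exists_exact
      have h1 := ih e hL (fun t ht => Ev.cov1 hf hfg hg (hG.depth hd0 t (by omega))
        (fun j hj => hM j (by omega))) i
      rw [Nat.add_right_comm e 1 i]
      exact Ev.con1 hf hfg hg h1 (((isGDimZero_iff G).1 hG).2.2.1 _)

end Part4

section Part5

variable {R : Type u} [CommRing R] (S : Submonoid R)

noncomputable abbrev ld (M : Type u) [AddCommGroup M] [Module R M] :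
    Module.Dual R M →ₗ[R] Module.Dual (Localization S) (LocalizedModule S M) :=
  IsLocalizedModule.mapExtendScalars S (LocalizedModule.mkLinearMap S M)
    (Algebra.linearMap R (Localization S)) (Localization S)

variable {M N K : Type u} [AddCommGroup M] [Module R M] [AddCommGroup N] [Module R N]
  [AddCommGroup K] [Module R K]

theorem ld_mk (φ : Module.Dual R M) (m : M) :
    ld S M φ (LocalizedModule.mk m 1) = algebraMap R (Localization S) (φ m) :=
  IsLocalizedModule.map_apply S (LocalizedModule.mkLinearMap S M)
    (Algebra.linearMap R (Localization S)) φ m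

theorem lm_ext {Q : Type u} [AddCommGroup Q] [Module (Localization S) Q]
    {a b : LocalizedModule S M →ₗ[Localization S] Q}
    (h : ∀ m, a (LocalizedModule.mk m 1) = b (LocalizedModule.mk m 1)) : a = b := by
  ext x
  induction x using LocalizedModule.induction_on with
  | _ m s =>
    have : LocalizedModule.mk m s = (Localization.mk 1 s : Localization S) •
        (LocalizedModule.mk m 1 : LocalizedModule S M) := by
      rw [LocalizedModule.mk_smul_mk, one_smul, mul_one]
    rw [this, map_smul, map_smul, h]

theorem lm_exact {f : K →ₗ[R] M} {g : M →ₗ[R] N} (h : Function.Exact f g) :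
    Function.Exact (LocalizedModule.map S f) (LocalizedModule.map S g) :=
  LocalizedModule.map_exact S f g h

theorem ld_comp (f : K →ₗ[R] M) (φ : Module.Dual R M) :
    ld S M φ ∘ₗ LocalizedModule.map S f = ld S K (φ ∘ₗ f) := by
  apply lm_ext
  intro m
  rw [LinearMap.comp_apply, LocalizedModule.map_mk, ld_mk, ld_mk, LinearMap.comp_apply]

variable [IsNoetherianRing R]

theorem ld_surj [Module.Finite R M] (ψ : Module.Dual (Localization S) (LocalizedModule S M)) :
    ∃ (φ : Module.Dual R M) (s : S), (s : R) • ψ = ld S M φ := by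
  have : Module.FinitePresentation R M := Module.finitePresentation_of_finite R M
  obtain ⟨⟨φ, s⟩, h⟩ := IsLocalizedModule.surj S (ld S M) ψ
  exact ⟨φ, s, h⟩

theorem ld_eq [Module.Finite R M] {φ ψ : Module.Dual R M} (h : ld S M φ = ld S M ψ) :
    ∃ s : S, (s : R) • φ = (s : R) • ψ := by
  have : Module.FinitePresentation R M := Module.finitePresentation_of_finite R M
  exact IsLocalizedModule.exists_of_eq (S := S) (f := ld S M) h

theorem unit_smul_cancel {Q : Type u} [AddCommGroup Q] [Module (Localization S) Q] [Module R Q]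
    [IsScalarTower R (Localization S) Q] (s : S) (x : Q) :
    (Localization.mk 1 s : Localization S) • ((s : R) • x) = x := by
  rw [← algebraMap_smul (Localization S) (s : R) x, smul_smul, ← Localization.mk_one_eq_algebraMap,
    Localization.mk_mul, one_mul, mul_one, Localization.mk_self, one_smul]

theorem Ev.localize (i : ℕ) : ∀ {M : Type u} [AddCommGroup M] [Module R M] [Module.Finite R M],
    Ev R (i+1) M R → Ev (Localization S) (i+1) (LocalizedModule S M) (Localization S) := by
  induction i with
  | zero =>
    intro M _ _ _ h
    obtain ⟨q, g, hg⟩ := Module.Finite.exists_fin' R M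
    have hf := (LinearMap.ker g).injective_subtype
    have hfg := LinearMap.exact_subtype_ker_map g
    refine Ev.con3 (LocalizedModule.map_injective S _ hf) (lm_exact S hfg)
      (LocalizedModule.map_surjective S _ hg) ?_ (Ev.of_proj 0)
    intro φ'
    obtain ⟨φ, s, hs⟩ := ld_surj S φ'
    obtain ⟨ψ, hψ⟩ := Ev.con4 hf hfg hg h φ
    refine ⟨(Localization.mk 1 s : Localization S) • ld S _ ψ, ?_⟩
    rw [LinearMap.smul_comp, ld_comp, hψ, ← hs]
    exact unit_smul_cancel S s φ'
  | succ i ih =>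
    intro M _ _ _ h
    obtain ⟨q, g, hg⟩ := Module.Finite.exists_fin' R M
    have hf := (LinearMap.ker g).injective_subtype
    have hfg := LinearMap.exact_subtype_ker_map g
    exact Ev.con1 (LocalizedModule.map_injective S _ hf) (lm_exact S hfg)
      (LocalizedModule.map_surjective S _ hg) (ih (Ev.con2 hf hfg hg (Ev.of_proj i) h))
      (Ev.of_proj (i+1))

theorem IsGDimZero.localize (h : IsGDimZero R M) :
    IsGDimZero (Localization S) (LocalizedModule S M) := by
  rw [isGDimZero_iff] at *
  obtain ⟨h1, h2, h3, h4⟩ := h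
  have fp : Module.FinitePresentation R M := Module.finitePresentation_of_finite R M
  have fd : Module.Finite R (Module.Dual R M) := inferInstance
  have fpd : Module.FinitePresentation R (Module.Dual R M) := Module.finitePresentation_of_finite R _
  refine ⟨inferInstance, ?_, fun i => (h3 i).localize S i, fun i => ?_⟩
  · have key : (Module.Dual.eval (Localization S) (LocalizedModule S M)).restrictScalars R =
        IsLocalizedModule.map S (LocalizedModule.mkLinearMap S M)
          (IsLocalizedModule.mapExtendScalars S (ld S M)
            (Algebra.linearMap R (Localization S)) (Localization S)) (Module.Dual.eval R M) := by
      refine IsLocalizedModule.linearMap_ext S (LocalizedModule.mkLinearMap S M)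
        (IsLocalizedModule.mapExtendScalars S (ld S M)
            (Algebra.linearMap R (Localization S)) (Localization S)) ?_
      ext m : 1
      rw [LinearMap.comp_apply, LinearMap.comp_apply, IsLocalizedModule.map_apply]
      apply LinearMap.restrictScalars_injective R
      refine IsLocalizedModule.linearMap_ext S (ld S M) (Algebra.linearMap R (Localization S)) ?_
      ext φ
      exact (ld_mk S φ m).trans (IsLocalizedModule.map_apply S (ld S M)
        (Algebra.linearMap R (Localization S)) (Module.Dual.eval R M m) φ).symm
    have hb : Function.Bijective ((Module.Dual.eval (Localization S)
        (LocalizedModule S M)).restrictScalars R) := by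
      rw [key]
      exact ⟨IsLocalizedModule.map_injective S _ _ _ h2.1,
        IsLocalizedModule.map_surjective S _ _ _ h2.2⟩
    exact hb
  · refine Ev.congr_left ?_ ((h4 i).localize S i)
    exact IsLocalizedModule.mapEquiv S (LocalizedModule.mkLinearMap S (Module.Dual R M)) (ld S M)
      (Localization S) (LinearEquiv.refl R _)

theorem GDimLE.localize {n : ℕ} : ∀ {M : Type u} [AddCommGroup M] [Module R M],
    GDimLE R n (ModuleCat.of R M) →
    GDimLE (Localization S) n (ModuleCat.of (Localization S) (LocalizedModule S M)) := by
  induction n with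
  | zero => intro M _ _ h; exact IsGDimZero.localize S h
  | succ n ih =>
    intro M _ _ h
    obtain ⟨L, G, f, g, hf, hfg, hg, hG, hL⟩ := h.exists_exact
    exact GDimLE.of_exact (LocalizedModule.map_injective S _ hf) (lm_exact S hfg)
      (LocalizedModule.map_surjective S _ hg) (hG.localize S) (ih hL)

end Part5

section Part6

variable {R : Type u} [CommRing R]

theorem descend {A B C N : Type u} [AddCommGroup A] [Module R A] [AddCommGroup B] [Module R B]
    [AddCommGroup C] [Module R C] [AddCommGroup N] [Module R N] {f : A →ₗ[R] B} {g : B →ₗ[R] C}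
    (hfg : Function.Exact f g) (hg : Function.Surjective g) (φ : B →ₗ[R] N) (h : φ ∘ₗ f = 0) :
    ∃ ψ : C →ₗ[R] N, ψ ∘ₗ g = φ := by
  have hk : LinearMap.ker g ≤ LinearMap.ker φ := by
    intro x hx
    obtain ⟨y, rfl⟩ := (hfg x).1 hx
    exact LinearMap.congr_fun h y
  refine ⟨Submodule.liftQ _ φ hk ∘ₗ (LinearMap.quotKerEquivOfSurjective g hg).symm.toLinearMap, ?_⟩
  ext x
  have : (LinearMap.quotKerEquivOfSurjective g hg).symm (g x) = Submodule.Quotient.mk x := by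
    rw [LinearEquiv.symm_apply_eq]; rfl
  simp only [LinearMap.comp_apply, LinearEquiv.coe_coe, this]
  exact Submodule.liftQ_apply _ _ _

theorem ev_res {N : Type u} [AddCommGroup N] [Module R N] (i : ℕ) :
    ∀ {M : Type u} [AddCommGroup M] [Module R M]
    (P : ℕ → Type u) [∀ i, AddCommGroup (P i)] [∀ i, Module R (P i)]
    [∀ i, Module.Projective R (P i)] (d : ∀ i, P (i+1) →ₗ[R] P i) (ε : P 0 →ₗ[R] M)
    (_ : Function.Surjective ε) (_ : Function.Exact (d 0) ε)
    (_ : ∀ i, Function.Exact (d (i+1)) (d i)),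
    Ev R (i+1) M N ↔ ∀ φ : P (i+1) →ₗ[R] N, φ ∘ₗ d (i+1) = 0 → ∃ ψ : P i →ₗ[R] N, ψ ∘ₗ d i = φ := by
  induction i with
  | zero =>
    intro M _ _ P _ _ _ d ε hs h0 h
    have hf := (LinearMap.ker ε).injective_subtype
    have hfg := LinearMap.exact_subtype_ker_map ε
    let d' : P 1 →ₗ[R] LinearMap.ker ε := (d 0).codRestrict _ fun x => h0.apply_apply_eq_zero x
    have hd' : Function.Surjective d' := by
      rintro ⟨x, hx⟩
      obtain ⟨y, hy⟩ := (h0 x).1 hx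
      exact ⟨y, Subtype.ext hy⟩
    have hex : Function.Exact (d 1) d' := by
      intro x
      rw [← h 0 x, ← Subtype.coe_inj]
      rfl
    constructor
    · intro hE φ hφ
      obtain ⟨φ', rfl⟩ := descend hex hd' φ hφ
      obtain ⟨ψ, rfl⟩ := Ev.con4 hf hfg hs hE φ'
      exact ⟨ψ, rfl⟩
    · intro H
      refine Ev.con3 hf hfg hs (fun φ => ?_) (Ev.of_proj 0)
      obtain ⟨ψ, hψ⟩ := H (φ ∘ₗ d') (by
        ext x
        simp [hex.apply_apply_eq_zero])
      refine ⟨ψ, ?_⟩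
      ext x
      obtain ⟨y, rfl⟩ := hd' x
      exact LinearMap.congr_fun hψ y
  | succ i ih =>
    intro M _ _ P _ _ _ d ε hs h0 h
    have hf := (LinearMap.ker ε).injective_subtype
    have hfg := LinearMap.exact_subtype_ker_map ε
    let d' : P 1 →ₗ[R] LinearMap.ker ε := (d 0).codRestrict _ fun x => h0.apply_apply_eq_zero x
    have hd' : Function.Surjective d' := by
      rintro ⟨x, hx⟩
      obtain ⟨y, hy⟩ := (h0 x).1 hx
      exact ⟨y, Subtype.ext hy⟩
    have hex : Function.Exact (d 1) d' := by
      intro x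
      rw [← h 0 x, ← Subtype.coe_inj]
      rfl
    rw [← ih (fun j => P (j+1)) (fun j => d (j+1)) d' hd' hex (fun j => h (j+1))]
    exact ⟨fun hE => Ev.con2 hf hfg hs (Ev.of_proj i) hE,
      fun hE => Ev.con1 hf hfg hs hE (Ev.of_proj (i+1))⟩

end Part6

section Part7

variable {R : Type u} [CommRing R]

theorem le_edepth_iff (I : Ideal R) (M : Type u) [AddCommGroup M] [Module R M] (c : ℕ∞) :
    c ≤ edepth R I M ↔ ∀ k : ℕ, (k : ℕ∞) < c → Ev R k (R ⧸ I) M := by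
  unfold edepth
  rw [le_sInf_iff]
  constructor
  · intro h k hk
    rw [← extM_iff]
    by_contra hc
    exact absurd (h k ⟨k, rfl, hc⟩) (not_le.2 hk)
  · rintro h b ⟨k, rfl, hk⟩
    by_contra hc
    exact hk ((extM_iff _ _ _).2 (h k (not_le.1 hc)))

variable {M : Type u} [AddCommGroup M] [Module R M]

theorem MinRes.ex0 (F : MinRes R M) : Function.Exact (F.d 0) F.ε :=
  LinearMap.exact_iff.2 F.exact0.symm

theorem MinRes.ex (F : MinRes R M) (i : ℕ) : Function.Exact (F.d (i+1)) (F.d i) :=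
  LinearMap.exact_iff.2 (F.exact i).symm

theorem MinRes.ev_iff (F : MinRes R M) (i : ℕ) :
    Ev R (i+1) M R ↔ ∀ φ : F.P (i+1) →ₗ[R] R, φ ∘ₗ F.d (i+1) = 0 →
      ∃ ψ : F.P i →ₗ[R] R, ψ ∘ₗ F.d i = φ := by
  have := F.projective
  exact ev_res i (fun j => F.P j) F.d F.ε F.surj F.ex0 F.ex

abbrev MinRes.B (F : MinRes R M) (j : ℕ) : Submodule R (Module.Dual R (F.P (j+1))) :=
  LinearMap.range (F.d j).dualMap

def MinRes.BT (F : MinRes R M) (j : ℕ) : Type u := ↥(LinearMap.range (F.d j).dualMap)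

instance (F : MinRes R M) (j : ℕ) : AddCommGroup (F.BT j) :=
  inferInstanceAs (AddCommGroup ↥(LinearMap.range (F.d j).dualMap))

instance (F : MinRes R M) (j : ℕ) : Module R (F.BT j) :=
  inferInstanceAs (Module R ↥(LinearMap.range (F.d j).dualMap))

def MinRes.inc (F : MinRes R M) (j : ℕ) : F.BT j →ₗ[R] Module.Dual R (F.P (j+1)) :=
  (LinearMap.range (F.d j).dualMap).subtype

def MinRes.pr (F : MinRes R M) (j : ℕ) : Module.Dual R (F.P (j+1)) →ₗ[R] F.BT (j+1) :=
  (F.d (j+1)).dualMap.rangeRestrict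

def MinRes.qt (F : MinRes R M) (j : ℕ) : Module.Dual R (F.P (j+1)) →ₗ[R] F.T j :=
  (LinearMap.range (F.d j).dualMap).mkQ

theorem MinRes.inc_inj (F : MinRes R M) (j : ℕ) : Function.Injective (F.inc j) :=
  Subtype.val_injective

theorem MinRes.pr_surj (F : MinRes R M) (j : ℕ) : Function.Surjective (F.pr j) :=
  LinearMap.surjective_rangeRestrict _

theorem MinRes.qt_surj (F : MinRes R M) (j : ℕ) : Function.Surjective (F.qt j) :=
  Submodule.mkQ_surjective _

theorem MinRes.inc_qt (F : MinRes R M) (j : ℕ) : Function.Exact (F.inc j) (F.qt j) :=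
  LinearMap.exact_subtype_mkQ (LinearMap.range (F.d j).dualMap)

theorem MinRes.qt_eq_zero (F : MinRes R M) (j : ℕ) (φ) : F.qt j φ = 0 ↔ φ ∈ F.B j :=
  Submodule.Quotient.mk_eq_zero (LinearMap.range (F.d j).dualMap)

/-- exactness of `B j → P (j+1)* → B (j+1)` under vanishing of Ext. -/
theorem MinRes.B_exact (F : MinRes R M) (j : ℕ) (h : Ev R (j+1) M R) :
    Function.Exact (F.inc j) (F.pr j) := by
  intro φ
  have h1 : F.pr j φ = 0 ↔ φ ∘ₗ F.d (j+1) = 0 :=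
    ⟨fun h => congrArg Subtype.val h, fun h => Subtype.ext h⟩
  rw [h1]
  constructor
  · intro hφ
    obtain ⟨ψ, hψ⟩ := (F.ev_iff j).1 h φ hφ
    exact ⟨⟨φ, ψ, hψ⟩, rfl⟩
  · rintro ⟨⟨_, ψ, rfl⟩, rfl⟩
    ext x
    change ψ (F.d j (F.d (j+1) x)) = 0
    rw [(F.ex j).apply_apply_eq_zero, map_zero]

section loccov

variable {S : Submonoid R} {A B C : Type u} [AddCommGroup A] [Module R A] [AddCommGroup B]
  [Module R B] [AddCommGroup C] [Module R C] {X : Type u} [AddCommGroup X]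
  [Module (Localization S) X]

theorem Ev.lcov1 {f : A →ₗ[R] B} {g : B →ₗ[R] C} (hf : Function.Injective f)
    (hfg : Function.Exact f g) (hg : Function.Surjective g) {i : ℕ}
    (h1 : Ev (Localization S) i X (LocalizedModule S B))
    (h2 : ∀ j, j + 1 = i → Ev (Localization S) j X (LocalizedModule S C)) :
    Ev (Localization S) i X (LocalizedModule S A) :=
  Ev.cov1 (LocalizedModule.map_injective S _ hf) (lm_exact S hfg)
    (LocalizedModule.map_surjective S _ hg) h1 h2

theorem Ev.lcov2 {f : A →ₗ[R] B} {g : B →ₗ[R] C} (hf : Function.Injective f)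
    (hfg : Function.Exact f g) (hg : Function.Surjective g) {i : ℕ}
    (h1 : Ev (Localization S) i X (LocalizedModule S B))
    (h2 : Ev (Localization S) (i+1) X (LocalizedModule S A)) :
    Ev (Localization S) i X (LocalizedModule S C) :=
  Ev.cov2 (LocalizedModule.map_injective S _ hf) (lm_exact S hfg)
    (LocalizedModule.map_surjective S _ hg) h1 h2

end loccov

variable [IsNoetherianRing R]

theorem ev_dual_loc (p : Ideal R) [p.IsPrime] {d : ℕ}
    (hd0 : ∀ t < d, Ev (Localization.AtPrime p) t (Localization.AtPrime p ⧸
      IsLocalRing.maximalIdeal (Localization.AtPrime p)) (Localization.AtPrime p))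
    (P : Type u) [AddCommGroup P] [Module R P] [Module.Finite R P] [Module.Projective R P]
    (t : ℕ) (ht : t < d) : Ev (Localization.AtPrime p) t (Localization.AtPrime p ⧸
      IsLocalRing.maximalIdeal (Localization.AtPrime p))
      (LocalizedModule p.primeCompl (Module.Dual R P)) :=
  have : IsNoetherianRing (Localization.AtPrime p) :=
    IsLocalization.isNoetherianRing p.primeCompl _ inferInstance
  IsGDimZero.depth hd0 t ht ((isGDimZero_of_proj (Module.Dual R P)).localize p.primeCompl)

theorem forward_aux (F : MinRes R M) (n : ℕ) (hE : ∀ j, j + 1 < n → Ev R (j+1) M R)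
    (p : Ideal R) [p.IsPrime] {d : ℕ}
    (hd0 : ∀ t < d, Ev (Localization.AtPrime p) t (Localization.AtPrime p ⧸
      IsLocalRing.maximalIdeal (Localization.AtPrime p)) (Localization.AtPrime p)) (t : ℕ) :
    ∀ j, t < d → t + j < n → Ev (Localization.AtPrime p) t (Localization.AtPrime p ⧸
      IsLocalRing.maximalIdeal (Localization.AtPrime p))
      (LocalizedModule p.primeCompl (F.BT j)) := by
  induction t with
  | zero =>
    intro j ht hj
    have := F.projective (j+1)
    have := F.finite (j+1)
    exact Ev.lcov1 (F.inc_inj j) (F.inc_qt j) (F.qt_surj j)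
      (ev_dual_loc p hd0 _ _ ht) (by intro j hj; omega)
  | succ t ih =>
    intro j ht hj
    have := F.projective (j+1)
    have := F.finite (j+1)
    exact Ev.lcov1 (F.inc_inj j) (F.B_exact j (hE j (by omega))) (F.pr_surj j)
      (ev_dual_loc p hd0 _ _ ht) (by
        intro l hl
        obtain rfl : l = t := by omega
        exact ih (j+1) (by omega) (by omega))

theorem backward_aux (F : MinRes R M) (a : ℕ) (hE : ∀ j, j < a → Ev R (j+1) M R)
    (p : Ideal R) [p.IsPrime]
    (hd0 : ∀ t < a + 2, Ev (Localization.AtPrime p) t (Localization.AtPrime p ⧸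
      IsLocalRing.maximalIdeal (Localization.AtPrime p)) (Localization.AtPrime p))
    (hB : ∀ t < a + 2, Ev (Localization.AtPrime p) t (Localization.AtPrime p ⧸
      IsLocalRing.maximalIdeal (Localization.AtPrime p)) (LocalizedModule p.primeCompl (F.BT 0)))
    (j : ℕ) : ∀ t, t + j < a + 2 → j ≤ a → Ev (Localization.AtPrime p) t (Localization.AtPrime p ⧸
      IsLocalRing.maximalIdeal (Localization.AtPrime p))
      (LocalizedModule p.primeCompl (F.BT j)) := by
  induction j with
  | zero => intro t ht _; exact hB t (by omega)
  | succ j ih =>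
    intro t ht hj
    have := F.projective (j+1)
    have := F.finite (j+1)
    exact Ev.lcov2 (F.inc_inj j) (F.B_exact j (hE j (by omega))) (F.pr_surj j)
      (ev_dual_loc p hd0 _ _ (by omega)) (ih (t+1) (by omega) (by omega))

theorem exists_prime (F : MinRes R M) (a : ℕ) (h : ¬ Ev R (a+1) M R) :
    ∃ (p : Ideal R) (_ : p.IsPrime) (φ : Module.Dual R (F.P (a+1))), φ ∘ₗ F.d (a+1) = 0 ∧
      ∀ r : R, r • φ ∈ F.B a ↔ r ∈ p := by
  rw [F.ev_iff a] at h
  push Not at h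
  obtain ⟨φ, h1, h2⟩ := h
  let z : Module.Dual R (F.P (a+1)) ⧸ F.B a := (F.B a).mkQ φ
  have hz : z ≠ 0 := by
    intro h0
    have : φ ∈ F.B a := by simpa [z] using h0
    obtain ⟨ψ, hψ⟩ := this
    exact h2 ψ hψ
  have : Nontrivial (Submodule.span R {z}) :=
    ⟨⟨⟨z, Submodule.mem_span_singleton_self z⟩, 0, fun h => hz (congrArg Subtype.val h)⟩⟩
  obtain ⟨p, hp⟩ := associatedPrimes.nonempty R (Submodule.span R {z})
  rw [AssociatedPrimes.mem_iff, isAssociatedPrime_iff] at hp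
  obtain ⟨hpp, ⟨x, hx⟩, hpx⟩ := hp
  obtain ⟨c, rfl⟩ := Submodule.mem_span_singleton.1 hx
  refine ⟨p, hpp, c • φ, ?_, ?_⟩
  · rw [LinearMap.smul_comp, h1, smul_zero]
  · intro r
    rw [hpx, Submodule.mem_colon_singleton, Submodule.mem_bot, ← Subtype.coe_inj]
    have : r • c • z = (F.B a).mkQ (r • c • φ) := by simp [z]
    change _ ↔ r • c • z = 0
    rw [this, Submodule.mkQ_apply, Submodule.Quotient.mk_eq_zero]

theorem depth_big (F : MinRes R M) (n : ℕ) (hG : GDimLE R n (ModuleCat.of R M))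
    {Q : Type u} [AddCommGroup Q] [Module R Q] [Module.Finite R Q] [Module.Projective R Q]
    (ι : M →ₗ[R] Module.Dual R Q) (hι : Function.Injective ι) (a : ℕ)
    (p : Ideal R) [p.IsPrime] (φ : Module.Dual R (F.P (a+1))) (h1 : φ ∘ₗ F.d (a+1) = 0)
    (h2 : ∀ r : R, r • φ ∈ F.B a ↔ r ∈ p) :
    ∀ t < a + 2, Ev (Localization.AtPrime p) t (Localization.AtPrime p ⧸
      IsLocalRing.maximalIdeal (Localization.AtPrime p)) (Localization.AtPrime p) := by
  classical
  by_contra hcon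
  simp only [not_forall, exists_prop] at hcon
  have hex : ∃ t, ¬ Ev (Localization.AtPrime p) t (Localization.AtPrime p ⧸
      IsLocalRing.maximalIdeal (Localization.AtPrime p)) (Localization.AtPrime p) :=
    by
    obtain ⟨t, _, h⟩ := hcon
    exact ⟨t, h⟩
  obtain ⟨d, hd, hmin⟩ : ∃ d, ¬ Ev (Localization.AtPrime p) d (Localization.AtPrime p ⧸
      IsLocalRing.maximalIdeal (Localization.AtPrime p)) (Localization.AtPrime p) ∧
      ∀ t < d, Ev (Localization.AtPrime p) t (Localization.AtPrime p ⧸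
      IsLocalRing.maximalIdeal (Localization.AtPrime p)) (Localization.AtPrime p) :=
    ⟨Nat.find hex, Nat.find_spec hex, fun t ht => not_not.1 (Nat.find_min hex ht)⟩
  obtain ⟨t0, ht0, hn0⟩ := hcon
  have hda : d ≤ a + 1 := by
    by_contra hc
    exact hn0 (hmin t0 (by omega))
  have : IsNoetherianRing (Localization.AtPrime p) :=
    IsLocalization.isNoetherianRing p.primeCompl _ inferInstance
  have hE := ev_of_depth hmin hd n (d-1) (hG.localize p.primeCompl) (by
    intro t ht
    obtain rfl : t = 0 := by omega
    exact Ev.lcov1 hι (LinearMap.exact_map_mkQ_range ι) (Submodule.mkQ_surjective _)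
      (ev_dual_loc p hmin Q 0 (by omega)) (by intro j hj; omega)) (a - (d-1))
  rw [show d - 1 + (a - (d-1)) + 1 = a + 1 by omega] at hE
  have hproj := F.projective
  have hfin := F.finite
  obtain ⟨ψ, hψ⟩ := (ev_res a (fun j => LocalizedModule p.primeCompl (F.P j))
    (fun j => LocalizedModule.map p.primeCompl (F.d j)) (LocalizedModule.map p.primeCompl F.ε)
    (LocalizedModule.map_surjective _ _ F.surj) (lm_exact _ F.ex0)
    (fun j => lm_exact _ (F.ex j))).1 hE (ld p.primeCompl _ φ) (by
      rw [ld_comp, h1, map_zero])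
  obtain ⟨χ, s, hs⟩ := ld_surj p.primeCompl ψ
  have e1 : ld p.primeCompl _ (χ ∘ₗ F.d a) = ld p.primeCompl _ ((s:R) • φ) := by
    rw [← ld_comp, ← hs, map_smul, ← hψ]
    rfl
  obtain ⟨w, hw⟩ := ld_eq p.primeCompl e1
  have : ((w:R) * (s:R)) • φ ∈ F.B a := by
    rw [mul_smul, ← hw]
    exact Submodule.smul_mem _ _ ⟨χ, rfl⟩
  rw [h2] at this
  exact (w * s).2 this

theorem final_contra (F : MinRes R M) (a : ℕ)
    (p : Ideal R) [p.IsPrime] (φ : Module.Dual R (F.P (a+1)))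
    (h2 : ∀ r : R, r • φ ∈ F.B a ↔ r ∈ p)
    (h : Ev (Localization.AtPrime p) 0 (Localization.AtPrime p ⧸
      IsLocalRing.maximalIdeal (Localization.AtPrime p))
      (LocalizedModule p.primeCompl (F.T a))) : False := by
  rw [Ev.zero_iff] at h
  let z : LocalizedModule p.primeCompl (F.T a) :=
    LocalizedModule.mk (F.qt a φ) 1
  have hk : IsLocalRing.maximalIdeal (Localization.AtPrime p) ≤
      LinearMap.ker (LinearMap.toSpanSingleton (Localization.AtPrime p) _ z) := by
    rw [← Localization.AtPrime.map_eq_maximalIdeal, Ideal.map_le_iff_le_comap]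
    intro r hr
    change (algebraMap R (Localization.AtPrime p) r) • z = 0
    rw [algebraMap_smul, LocalizedModule.smul'_mk, ← map_smul]
    have : F.qt a (r • φ) = 0 := by
      rw [F.qt_eq_zero]
      exact (h2 r).2 hr
    rw [this, LocalizedModule.zero_mk]
  have h3 := LinearMap.congr_fun (h (Submodule.liftQ _ _ hk)) (Submodule.Quotient.mk 1)
  have h4 : (1 : Localization.AtPrime p) • z = 0 := h3
  rw [one_smul, ← LocalizedModule.zero_mk 1, LocalizedModule.mk_eq] at h4
  obtain ⟨w, hw⟩ := h4
  have h5 : (w : R) • F.qt a φ = 0 := by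
    rw [one_smul, one_smul, smul_zero] at hw
    exact hw
  rw [← map_smul, F.qt_eq_zero, h2] at h5
  exact w.2 h5

theorem ev_iff_stilde [Module.Finite R M] (F : MinRes R M) (n : ℕ)
    (hG : GDimLE R n (ModuleCat.of R M))
    {Q : Type u} [AddCommGroup Q] [Module R Q] [Module.Finite R Q] [Module.Projective R Q]
    (ι : M →ₗ[R] Module.Dual R Q) (hι : Function.Injective ι) :
    (∀ j, j + 1 < n → Ev R (j+1) M R) ↔ Stilde R n F.lambdaMod := by
  constructor
  · intro hE p hp
    unfold locDepth
    rw [le_edepth_iff]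
    intro t ht
    rw [lt_min_iff] at ht
    refine forward_aux F n hE p (d := t + 1) ?_ t 0 (by omega) (by exact_mod_cast ht.1)
    intro t' ht'
    refine (le_edepth_iff _ _ (locRingDepth R p)).1 le_rfl t' (lt_of_le_of_lt ?_ ht.2)
    exact_mod_cast (by omega : t' ≤ t)
  · intro hS
    by_contra hcon
    classical
    have hex : ∃ j, ¬ Ev R (j+1) M R := by
      simp only [not_forall, exists_prop] at hcon
      obtain ⟨t, _, h⟩ := hcon
      exact ⟨t, h⟩
    obtain ⟨a, ha, hmin⟩ : ∃ a, ¬ Ev R (a+1) M R ∧ ∀ j < a, Ev R (j+1) M R :=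
      ⟨Nat.find hex, Nat.find_spec hex, fun t ht => not_not.1 (Nat.find_min hex ht)⟩
    simp only [not_forall, exists_prop] at hcon
    obtain ⟨j, hj, hnj⟩ := hcon
    have han : a + 1 < n := by
      by_contra hc
      exact hnj (hmin j (by omega))
    obtain ⟨p, hp, φ, h1, h2⟩ := exists_prime F a ha
    have hd0 := depth_big F n hG ι hι a p φ h1 h2
    have hB : ((a + 2 : ℕ) : ℕ∞) ≤ locDepth R p F.lambdaMod := by
      refine le_trans (le_min ?_ ?_) (hS p hp)
      · exact_mod_cast (by omega : a + 2 ≤ n)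
      · refine (le_edepth_iff _ _ _).2 fun k hk => hd0 k (by exact_mod_cast hk)
    have hB' := (le_edepth_iff _ _ _).1 hB
    have hBa := backward_aux F a hmin p hd0 (fun t ht => hB' t (by exact_mod_cast ht)) a 1
      (by omega) le_rfl
    have := F.projective (a+1)
    have := F.finite (a+1)
    refine final_contra F a p φ h2 ?_
    exact Ev.lcov2 (F.inc_inj a) (F.inc_qt a) (F.qt_surj a)
      (ev_dual_loc p hd0 _ _ (by omega)) hBa

theorem rgr_iff (n : ℕ) (h0 : 0 < n) (hG : GDim R M = (n : ℕ∞)) :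
    GDimLE R n (ModuleCat.of R M) ∧
    (rgr R M = (n : ℕ∞) ↔ ∀ j, j + 1 < n → Ev R (j+1) M R) := by
  have hle : GDimLE R n (ModuleCat.of R M) := by
    have hne : {n : ℕ∞ | ∃ k : ℕ, n = k ∧ GDimLE R k (ModuleCat.of R M)}.Nonempty := by
      by_contra hc
      rw [Set.not_nonempty_iff_eq_empty] at hc
      unfold GDim at hG
      rw [hc, sInf_empty] at hG
      exact ENat.natCast_ne_top n hG.symm
    obtain ⟨k, hk, hk'⟩ := csInf_mem hne
    unfold GDim at hG
    rw [hG] at hk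
    have : n = k := by exact_mod_cast hk
    exact this ▸ hk'
  have hnz : ¬ IsGDimZero R M := by
    intro hz
    have : GDim R M ≤ ((0:ℕ) : ℕ∞) := sInf_le ⟨0, rfl, hz⟩
    rw [hG] at this
    have : n ≤ 0 := by exact_mod_cast this
    omega
  refine ⟨hle, ?_⟩
  constructor
  · intro h j hj
    by_contra hc
    have : rgr R M ≤ ((j+1 : ℕ) : ℕ∞) :=
      sInf_le ⟨j+1, rfl, Nat.succ_pos _, fun hs => hc ((extM_iff _ _ _).1 hs)⟩
    rw [h] at this
    have : n ≤ j + 1 := by exact_mod_cast this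
    omega
  · intro h
    apply le_antisymm
    · obtain ⟨i, hi⟩ : ∃ i, ¬ Ev R (i+1) M R := by
        by_contra! hc
        exact hnz (hle.zero_of_ev hc)
      have : i + 1 ≤ n := by
        by_contra hc
        refine hi ?_
        have := hle.ev (i - n)
        rwa [show n + (i - n) + 1 = i + 1 by omega] at this
      have h3 : rgr R M ≤ ((i+1 : ℕ) : ℕ∞) :=
        sInf_le ⟨i+1, rfl, Nat.succ_pos _, fun hs => hi ((extM_iff _ _ _).1 hs)⟩
      exact h3.trans (by exact_mod_cast this)
    · refine le_sInf ?_
      rintro b ⟨k, rfl, hk, hb⟩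
      rw [extM_iff] at hb
      by_contra hc
      have hkn : k < n := by exact_mod_cast not_le.1 hc
      obtain ⟨j, rfl⟩ : ∃ j, k = j + 1 := ⟨k - 1, by omega⟩
      exact hb (h j hkn)

end Part7

section Statements

variable (R : Type u) [CommRing R] [IsNoetherianRing R]

theorem stmt12 (M : Type u) [AddCommGroup M] [Module R M] [Module.Finite R M]
    (F : MinRes R M) (hHL : IsHorizontallyLinked R M)
    (n : ℕ) (h0 : 0 < n) (hG : GDim R M = (n : ℕ∞)) :
    rgr R M = GDim R M ↔ Stilde R n F.lambdaMod := by
  obtain ⟨F', G, ⟨e⟩⟩ := hHL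
  have := G.projective 1
  have := G.finite 1
  obtain ⟨hle, hr⟩ := rgr_iff n h0 hG
  rw [hG, hr]
  let inc : G.lambdaMod →ₗ[R] Module.Dual R (G.P 1) := (LinearMap.range (G.d 0).dualMap).subtype
  have hinc : Function.Injective inc := Subtype.val_injective
  exact ev_iff_stilde F n hle (inc ∘ₗ e.symm.toLinearMap) (hinc.comp e.symm.injective)


end Statements
end
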